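/- arXiv:math/0609644 — 3 statements merged into one kernel-verified Lean document; each statement's English description precedes it below -/
import Mathlib

section
/- For every Young diagram Y, |S_Y(321)| ≤ |S_Y(312)|. -/
open Equiv

/-- `π` is a transversal of the Young diagram with row lengths `b` (zero-indexed:
the row at height `h` has `b h` cells, i.e. column `i` (1-indexed `i+1`) lies in that row
iff `(i:ℕ)+1 ≤ b h`). -/
def IsTransversal {n : ℕ} (b : Fin n → ℕ) (π : Equiv.Perm (Fin n)) : Prop :=
  ∀ i : Fin n, (i : ℕ) + 1 ≤ b (π i)

/-- The transversal `π` contains the pattern `τ` inside the Young diagram `b`: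
there are columns `f 0 < f 1 < …` whose dots are in the relative order prescribed by `τ`
and all rows and columns through these dots intersect inside the diagram. -/
def ContainsIn {n k : ℕ} (b : Fin n → ℕ) (π : Equiv.Perm (Fin n))
    (τ : Equiv.Perm (Fin k)) : Prop :=
  ∃ f : Fin k → Fin n, StrictMono f ∧
    (∀ s t : Fin k, τ s < τ t ↔ π (f s) < π (f t)) ∧
    (∀ s t : Fin k, (f s : ℕ) + 1 ≤ b (π (f t)))

/-- `|S_Y(τ)|`: the number of transversals of the Young diagram `b` avoiding `τ` in `Y`. -/
noncomputable def SYcard {n k : ℕ} (b : Fin n → ℕ) (τ : Equiv.Perm (Fin k)) : ℕ :=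
  Nat.card {π : Equiv.Perm (Fin n) // IsTransversal b π ∧ ¬ ContainsIn b π τ}

/-- Classical pattern containment for permutations. -/
def ContainsPat {n k : ℕ} (π : Equiv.Perm (Fin n)) (τ : Equiv.Perm (Fin k)) : Prop :=
  ∃ f : Fin k → Fin n, StrictMono f ∧ ∀ s t : Fin k, τ s < τ t ↔ π (f s) < π (f t)

/-- `|S_n(τ)|`: the number of permutations of length `n` avoiding `τ`. -/
noncomputable def SnCard (n : ℕ) {k : ℕ} (τ : Equiv.Perm (Fin k)) : ℕ :=
  Nat.card {π : Equiv.Perm (Fin n) // ¬ ContainsPat π τ}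

def p123 : Equiv.Perm (Fin 3) := Equiv.refl _
def p213 : Equiv.Perm (Fin 3) :=
  ⟨![1, 0, 2], ![1, 0, 2], by intro x; fin_cases x <;> rfl, by intro x; fin_cases x <;> rfl⟩
def p312 : Equiv.Perm (Fin 3) :=
  ⟨![2, 0, 1], ![1, 2, 0], by intro x; fin_cases x <;> rfl, by intro x; fin_cases x <;> rfl⟩
def p321 : Equiv.Perm (Fin 3) :=
  ⟨![2, 1, 0], ![2, 1, 0], by intro x; fin_cases x <;> rfl, by intro x; fin_cases x <;> rfl⟩

/-- `(σ|τ)`: the block sum with the block of `σ` before and entirely above the block of `τ`. -/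
def blockSum {m k : ℕ} (σ : Equiv.Perm (Fin m)) (τ : Equiv.Perm (Fin k)) :
    Equiv.Perm (Fin (m + k)) :=
  finSumFinEquiv.symm.trans ((((Equiv.sumCongr σ τ).trans
    (Equiv.sumComm (Fin m) (Fin k))).trans finSumFinEquiv).trans
    (finCongr (Nat.add_comm k m)))

/-- `|S_{↘Y}(τ)|`: avoiders whose two leftmost entries are decreasing. -/
noncomputable def SYcardLeftDesc {m k : ℕ} (b : Fin m → ℕ) (τ : Equiv.Perm (Fin k)) : ℕ :=
  Nat.card {π : Equiv.Perm (Fin m) // IsTransversal b π ∧ ¬ ContainsIn b π τ ∧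
    ∀ i j : Fin m, (i : ℕ) = 0 → (j : ℕ) = 1 → π j < π i}

/-- `|S_{↗Y}(τ)|`: avoiders whose two leftmost entries are increasing. -/
noncomputable def SYcardLeftAsc {m k : ℕ} (b : Fin m → ℕ) (τ : Equiv.Perm (Fin k)) : ℕ :=
  Nat.card {π : Equiv.Perm (Fin m) // IsTransversal b π ∧ ¬ ContainsIn b π τ ∧
    ∀ i j : Fin m, (i : ℕ) = 0 → (j : ℕ) = 1 → π i < π j}

/-- `|S^{↘}_Y(τ)|`: avoiders in which the value `m` occurs to the left of the value `m-1`. -/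
noncomputable def SYcardTopDesc {m k : ℕ} (b : Fin m → ℕ) (τ : Equiv.Perm (Fin k)) : ℕ :=
  Nat.card {π : Equiv.Perm (Fin m) // IsTransversal b π ∧ ¬ ContainsIn b π τ ∧
    ∀ u v : Fin m, (u : ℕ) + 1 = m → (v : ℕ) + 2 = m → π⁻¹ u < π⁻¹ v}

/-- `|S^{↗}_Y(τ)|`: avoiders in which the value `m-1` occurs to the left of the value `m`. -/
noncomputable def SYcardTopAsc {m k : ℕ} (b : Fin m → ℕ) (τ : Equiv.Perm (Fin k)) : ℕ :=
  Nat.card {π : Equiv.Perm (Fin m) // IsTransversal b π ∧ ¬ ContainsIn b π τ ∧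
    ∀ u v : Fin m, (u : ℕ) + 1 = m → (v : ℕ) + 2 = m → π⁻¹ v < π⁻¹ u}

/-!
Read the boundary path of the diagram, starting at its bottom left corner. Each column step appends
the entry of that column to the word of dots whose row is not yet completed, and each row step
deletes the smallest entry of this word. An occurrence of `312` lies in the diagram exactly when it
is visible in one of these words, while an occurrence of `321` in a transversal always lies in the
diagram, because its corner is one of its own dots.

A `312`-avoiding word is a plane forest, with positions in postorder and values in preorder.
Appending an entry grafts the last few trees onto a new root, and deleting the smallest entry
replaces the first root by its children. Inserting the smallest entries back, row by row, turns the
histories of this kind along the diagram `b`, which `historyCount b nil` counts, into distinct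
`312`-avoiding transversals.

For `321`, let `N(b, j)` be the number of avoiders that are increasing on the first `j` columns, and
let `b'` be the diagram left when the bottom row and the column of its dot are removed. Looking at a
descent between columns `j` and `j + 1` yields `N(b, j) ≤ N(b, j + 1) + N(b', j - 1)` for
`0 < j < b 0`, and `N(b, b 0) ≤ N(b', b 0 - 1)`. Hence `N(b, j)` is at most the number of histories
that start from `j` one-vertex trees, because the latter satisfies the reverse inequality.

The reverse inequality rests on the fact that the number of histories does not decrease under a
rotation, in which a vertex hands its last subtrees over to become its next siblings. The forests
reached by grafting from one-vertex trees are grouped into families with a fixed left spine and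
varying numbers of leaves in the gaps along it. Grafting another root leads to families of the same
kind, and a rotation compares the members with empty innermost gap to those whose first root has
been deleted.
-/

open Finset.HasAntidiagonal
open Finset (HasAntidiagonal)

theorem sum_antidiagonal_assoc {A M : Type*} [AddMonoid A] [HasAntidiagonal A]
    [AddCommMonoid M] (f : A → A → A → M) (n : A) :
    ∑ p ∈ antidiagonal n, ∑ q ∈ antidiagonal p.1, f q.1 q.2 p.2 =
      ∑ p ∈ antidiagonal n, ∑ q ∈ antidiagonal p.2, f p.1 q.1 q.2 := by
  simp only [Finset.sum_sigma']
  refine Finset.sum_nbij' (fun ⟨⟨_, z⟩, ⟨x, y⟩⟩ => ⟨(x, y + z), (y, z)⟩)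
    (fun ⟨⟨x, _⟩, ⟨y, z⟩⟩ => ⟨(x + y, z), (x, y)⟩) ?_ ?_ ?_ ?_ ?_ <;>
  · rintro ⟨⟨_, _⟩, ⟨_, _⟩⟩ h
    simp only [Finset.mem_sigma, mem_antidiagonal] at h
    obtain ⟨rfl, rfl⟩ := h
    simp [add_assoc]

/-! ### Plane forests -/

/-- Plane forests: `node L R` is the forest whose first tree consists of a root above the forest
`L`, and whose other trees form the forest `R`. A forest stands for the relative order of a word
avoiding `312`, see `PlaneForest.HasShape`. -/
inductive PlaneForest : Type
  | nil : PlaneForest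
  | node : PlaneForest → PlaneForest → PlaneForest

namespace PlaneForest

/-- The number of vertices of a plane forest. -/
def size : PlaneForest → ℕ
  | nil => 0
  | node L R => L.size + R.size + 1

/-- The juxtaposition of two plane forests, written `A ++ B`. -/
def append : PlaneForest → PlaneForest → PlaneForest
  | nil, B => B
  | node L R, B => node L (append R B)

instance : Append PlaneForest := ⟨append⟩

/-- The forest `F` preceded by `s` one-vertex trees. -/
def consLeaves : ℕ → PlaneForest → PlaneForest
  | 0, F => F
  | s + 1, F => node nil (consLeaves s F)

@[simp] theorem size_nil : nil.size = 0 := rfl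

@[simp] theorem size_node (L R : PlaneForest) : (node L R).size = L.size + R.size + 1 := rfl

@[simp] theorem nil_append (B : PlaneForest) : nil ++ B = B := rfl

@[simp] theorem node_append (L R B : PlaneForest) : node L R ++ B = node L (R ++ B) := rfl

@[simp] theorem size_append (A B : PlaneForest) : (A ++ B).size = A.size + B.size := by
  induction A with
  | nil => simp
  | node L R _ ih => simp only [node_append, size_node, ih]; omega

theorem append_assoc (A B C : PlaneForest) : A ++ B ++ C = A ++ (B ++ C) := by
  induction A with
  | nil => rfl
  | node L R _ ih => simp only [node_append, ih]

@[simp] theorem consLeaves_zero (F : PlaneForest) : consLeaves 0 F = F := rfl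

theorem consLeaves_succ (s : ℕ) (F : PlaneForest) :
    consLeaves (s + 1) F = node nil (consLeaves s F) := rfl

@[simp] theorem size_consLeaves (s : ℕ) (F : PlaneForest) :
    (consLeaves s F).size = s + F.size := by
  induction s with
  | zero => simp
  | succ s ih => simp only [consLeaves_succ, size_node, size_nil, ih]; omega

theorem consLeaves_node_nil (s : ℕ) (F : PlaneForest) :
    consLeaves s (node nil F) = consLeaves (s + 1) F := by
  induction s with
  | zero => rfl
  | succ s ih => rw [consLeaves_succ, ih, consLeaves_succ (s + 1)]

theorem consLeaves_append (s : ℕ) (F G : PlaneForest) :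
    consLeaves s F ++ G = consLeaves s (F ++ G) := by
  induction s with
  | zero => rfl
  | succ s ih => simp only [consLeaves_succ, node_append, ih]

/-! ### Grafting a root and deleting the first root -/

open Classical in
/-- The forests obtained from `F` by grafting the last `t` trees of `F` onto a new root, where `t`
runs from `0` to the number of trees of `F`. -/
noncomputable def grafts : PlaneForest → Finset PlaneForest
  | nil => {node nil nil}
  | node L R => insert (node (node L R) nil) (R.grafts.image (node L))

theorem mem_grafts_node {L R G : PlaneForest} :
    G ∈ (node L R).grafts ↔ G = node (node L R) nil ∨ ∃ B ∈ R.grafts, node L B = G := by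
  simp [grafts]

theorem size_of_mem_grafts {F G : PlaneForest} (h : G ∈ F.grafts) : G.size = F.size + 1 := by
  induction F generalizing G with
  | nil => simp [Finset.mem_singleton.1 h]
  | node L R _ ih =>
    obtain rfl | ⟨B, hB, rfl⟩ := mem_grafts_node.1 h
    · simp
    · simp only [size_node, ih hB]; omega

/-- The operator sending a statistic `φ` to its sum over all ways of grafting a root. -/
noncomputable def graftSum (φ : PlaneForest → ℕ) (F : PlaneForest) : ℕ :=
  ∑ G ∈ F.grafts, φ G

/-- The operator sending a statistic `φ` to its value after the root of the first tree is deleted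
and replaced by its children; an empty forest has no such root and gets the value `0`. -/
def deleteEval (φ : PlaneForest → ℕ) : PlaneForest → ℕ
  | nil => 0
  | node L R => φ (L ++ R)

@[simp] theorem deleteEval_node (φ : PlaneForest → ℕ) (L R : PlaneForest) :
    deleteEval φ (node L R) = φ (L ++ R) := rfl

@[simp] theorem graftSum_nil (φ : PlaneForest → ℕ) : graftSum φ nil = φ (node nil nil) := by
  simp [graftSum, grafts]

theorem graftSum_node (φ : PlaneForest → ℕ) (L R : PlaneForest) :
    graftSum φ (node L R) = φ (node (node L R) nil) + graftSum (fun B => φ (node L B)) R := by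
  classical
  have hnew : node (node L R) nil ∉ R.grafts.image (node L) := by
    simp only [Finset.mem_image, node.injEq, not_exists, not_and]
    rintro B hB - rfl
    simpa using size_of_mem_grafts hB
  have hinj : Set.InjOn (node L) R.grafts := fun _ _ _ _ h => (node.inj h).2
  unfold graftSum
  rw [← Finset.sum_image (f := φ) hinj, ← Finset.sum_insert hnew, grafts]

theorem graftSum_append_le (φ : PlaneForest → ℕ) (A B : PlaneForest) :
    graftSum (fun G => φ (A ++ G)) B ≤ graftSum φ (A ++ B) := by
  induction A generalizing φ with
  | nil => exact le_rfl
  | node L R _ ih =>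
    rw [node_append, graftSum_node]
    exact (ih fun G => φ (node L G)).trans (Nat.le_add_left _ _)

theorem graftSum_consLeaves_node (φ : PlaneForest → ℕ) (s : ℕ) (K X : PlaneForest) :
    graftSum φ (consLeaves s (node K X)) =
      graftSum (fun X' => φ (consLeaves s (node K X'))) X +
        ∑ p ∈ antidiagonal s,
          φ (consLeaves p.1 (node (consLeaves p.2 (node K X)) nil)) := by
  induction s generalizing φ with
  | zero => simp [graftSum_node, add_comm]
  | succ s ih =>
    simp only [consLeaves_succ, graftSum_node, ih, Finset.Nat.sum_antidiagonal_succ,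
      consLeaves_zero]
    omega

theorem graftSum_leaves (φ : PlaneForest → ℕ) (s : ℕ) :
    graftSum φ (consLeaves s nil) =
      ∑ p ∈ antidiagonal s, φ (consLeaves p.1 (node (consLeaves p.2 nil) nil)) := by
  induction s generalizing φ with
  | zero => simp
  | succ s ih =>
    simp only [consLeaves_succ, graftSum_node, ih, Finset.Nat.sum_antidiagonal_succ,
      consLeaves_zero]

/-! ### Rotations -/

/-- A rotation: some vertex hands its last few subtrees over to become its next siblings. -/
inductive Rotation : PlaneForest → PlaneForest → Prop
  | root (C A B : PlaneForest) : Rotation (node (C ++ A) B) (node C (A ++ B))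
  | left {A A' : PlaneForest} (B : PlaneForest) : Rotation A A' → Rotation (node A B) (node A' B)
  | right (A : PlaneForest) {B B' : PlaneForest} : Rotation B B' → Rotation (node A B) (node A B')

/-- A statistic on plane forests is rotation-monotone if no rotation decreases it. -/
def RotationMonotone (φ : PlaneForest → ℕ) : Prop :=
  ∀ ⦃F F' : PlaneForest⦄, Rotation F F' → φ F ≤ φ F'

theorem Rotation.size_eq {F F' : PlaneForest} (h : Rotation F F') : F.size = F'.size := by
  induction h with
  | root C A B => simp only [size_node, size_append]; omega
  | left B _ ih => simp only [size_node, ih]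
  | right A _ ih => simp only [size_node, ih]

theorem Rotation.append_right {A A' : PlaneForest} (h : Rotation A A') (B : PlaneForest) :
    Rotation (A ++ B) (A' ++ B) := by
  induction h with
  | root C A D => simpa only [node_append, append_assoc] using root C A (D ++ B)
  | left D h _ => exact h.left _
  | right A _ ih => exact ih.right _

theorem Rotation.append_left (A : PlaneForest) {B B' : PlaneForest} (h : Rotation B B') :
    Rotation (A ++ B) (A ++ B') := by
  induction A with
  | nil => exact h
  | node L R _ ih => exact ih.right _

theorem Rotation.consLeaves (s : ℕ) {F F' : PlaneForest} (h : Rotation F F') :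
    Rotation (consLeaves s F) (consLeaves s F') := by
  induction s with
  | zero => exact h
  | succ s ih => exact ih.right _

namespace RotationMonotone

variable {φ : PlaneForest → ℕ}

theorem graftSum (hφ : RotationMonotone φ) : RotationMonotone (graftSum φ) := by
  intro F F' h
  induction h generalizing φ with
  | root C A B =>
    rw [graftSum_node, graftSum_node]
    refine Nat.add_le_add (hφ ((Rotation.root C A B).left _)) ?_
    exact (Finset.sum_le_sum fun G _ => hφ (Rotation.root C A G)).trans
      (graftSum_append_le (fun G => φ (node C G)) A B)
  | left B h _ =>
    rw [graftSum_node, graftSum_node]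
    exact Nat.add_le_add (hφ ((h.left _).left _)) (Finset.sum_le_sum fun G _ => hφ (h.left _))
  | right A h ih =>
    rw [graftSum_node, graftSum_node]
    exact Nat.add_le_add (hφ ((h.right _).left _))
      (ih (φ := fun G => φ (node A G)) fun _ _ h' => hφ (h'.right _))

theorem iterate_graftSum (hφ : RotationMonotone φ) (a : ℕ) :
    RotationMonotone (PlaneForest.graftSum^[a] φ) := by
  induction a with
  | zero => exact hφ
  | succ a ih => rw [Function.iterate_succ_apply']; exact ih.graftSum

theorem deleteEval (hφ : RotationMonotone φ) : RotationMonotone (deleteEval φ)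
  | _, _, .root C A B => by simp only [deleteEval_node, append_assoc, le_refl]
  | _, _, .left B h => hφ (h.append_right B)
  | _, _, .right A h => hφ (h.append_left A)

end RotationMonotone

/-! ### Forests with a prescribed left spine -/

/-- For `c = [X₀, …, Xₖ]`, the sum of `φ` over all forests
`•^{x₀} [•^{x₁} [⋯ [•^{xₖ₊₁}] Xₖ ⋯] X₁] X₀` with `x₀ + ⋯ + xₖ₊₁ = s`, weighted by `w xₖ₊₁`. Here
`•^x` stands for `x` one-vertex trees and `[K]` for the tree with `K` below its root. -/
def spineSum (w : ℕ → ℕ) : List PlaneForest → ℕ → (PlaneForest → ℕ) → ℕ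
  | [], s, φ => w s * φ (consLeaves s nil)
  | X :: c, s, φ =>
    ∑ p ∈ antidiagonal s, spineSum w c p.2 fun K => φ (consLeaves p.1 (node K X))

/-- The weight that restricts a `spineSum` to the forests with a nonempty innermost gap. -/
def posWeight (x : ℕ) : ℕ := if x = 0 then 0 else 1

section spineSum

variable (w : ℕ → ℕ) (c : List PlaneForest) (s : ℕ)

theorem spineSum_cons (X : PlaneForest) (φ : PlaneForest → ℕ) :
    spineSum w (X :: c) s φ =
      ∑ p ∈ antidiagonal s, spineSum w c p.2 fun K => φ (consLeaves p.1 (node K X)) := rfl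

theorem spineSum_add (φ ψ : PlaneForest → ℕ) :
    spineSum w c s (fun F => φ F + ψ F) = spineSum w c s φ + spineSum w c s ψ := by
  induction c generalizing s φ ψ with
  | nil => exact mul_add _ _ _
  | cons X c ih => simp only [spineSum, ih, Finset.sum_add_distrib]

theorem spineSum_sum {ι : Type*} (t : Finset ι) (φ : ι → PlaneForest → ℕ) :
    spineSum w c s (fun F => ∑ i ∈ t, φ i F) = ∑ i ∈ t, spineSum w c s (φ i) := by
  induction c generalizing s φ with
  | nil => exact Finset.mul_sum _ _ _
  | cons X c ih => simp only [spineSum, ih]; exact Finset.sum_comm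

theorem spineSum_mono {φ ψ : PlaneForest → ℕ} (h : ∀ F, φ F ≤ ψ F) :
    spineSum w c s φ ≤ spineSum w c s ψ := by
  induction c generalizing s φ ψ with
  | nil => exact Nat.mul_le_mul_left _ (h _)
  | cons X c ih => exact Finset.sum_le_sum fun _ _ => ih _ fun _ => h _

/-- The new root gathers either some trees of the outermost forest `X`, or all of `X` together with
the spine, which then becomes longer by one vertex. -/
theorem spineSum_graftSum (X : PlaneForest) (φ : PlaneForest → ℕ) :
    spineSum w (X :: c) s (graftSum φ) =
      graftSum (fun X' => spineSum w (X' :: c) s φ) X + spineSum w (nil :: X :: c) s φ := by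
  have hX : ∑ p ∈ antidiagonal s, spineSum w c p.2
        (fun K => graftSum (fun X' => φ (consLeaves p.1 (node K X'))) X) =
      graftSum (fun X' => spineSum w (X' :: c) s φ) X := by
    simp only [graftSum, spineSum_sum, spineSum]
    exact Finset.sum_comm
  rw [spineSum_cons]
  simp only [graftSum_consLeaves_node, spineSum_add, Finset.sum_add_distrib, hX]
  congr 1
  simp only [spineSum, spineSum_sum]
  exact sum_antidiagonal_assoc
    (fun x y z => spineSum w c z fun K => φ (consLeaves x (node (consLeaves y (node K X)) nil))) s

theorem spineSum_succ_deleteEval (X : PlaneForest) (φ : PlaneForest → ℕ) :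
    spineSum w (X :: c) (s + 1) (deleteEval φ) =
      spineSum w c (s + 1) (fun K => φ (K ++ X)) + spineSum w (X :: c) s φ := by
  simp only [spineSum, Finset.Nat.sum_antidiagonal_succ, consLeaves_zero, consLeaves_succ,
    deleteEval_node, nil_append]

end spineSum

theorem graftSum_leaves_eq_spineSum (φ : PlaneForest → ℕ) (s : ℕ) :
    graftSum φ (consLeaves s nil) = spineSum 1 [nil] s φ := by
  simp [graftSum_leaves, spineSum]

theorem spineSum_one_singleton (s : ℕ) (X : PlaneForest) (φ : PlaneForest → ℕ) :
    spineSum 1 [X] s φ = φ (consLeaves (s + 1) X) + spineSum posWeight [X] s φ := by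
  cases s with
  | zero => simp [spineSum, posWeight, consLeaves_succ]
  | succ s => simp [spineSum, posWeight, Finset.Nat.sum_antidiagonal_succ', consLeaves_node_nil]

/-- A forest with empty innermost gap is turned by one rotation into a forest with nonempty
innermost gap, in which the two innermost forests `Y`, `X` are merged and the spine is shorter. -/
theorem spineSum_one_le (X : PlaneForest) (c : List PlaneForest) (s : ℕ) {φ : PlaneForest → ℕ}
    (hφ : RotationMonotone φ) :
    spineSum 1 (X :: c) s φ ≤
      spineSum posWeight c (s + 1) (fun K => φ (K ++ X)) + spineSum posWeight (X :: c) s φ := by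
  induction c generalizing X s φ with
  | nil =>
    rw [spineSum_one_singleton]
    simp [spineSum, posWeight, consLeaves_append]
  | cons Y c ih =>
    have hrot (x : ℕ) (K : PlaneForest) :
        φ (consLeaves x (node (K ++ Y) X)) ≤ φ (consLeaves x (node K Y) ++ X) := by
      rw [consLeaves_append, node_append]
      exact hφ ((Rotation.root K Y X).consLeaves x)
    calc spineSum 1 (X :: Y :: c) s φ
        ≤ ∑ p ∈ antidiagonal s,
            (spineSum posWeight c (p.2 + 1) (fun K => φ (consLeaves p.1 (node (K ++ Y) X))) +
              spineSum posWeight (Y :: c) p.2 fun K => φ (consLeaves p.1 (node K X))) :=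
          Finset.sum_le_sum fun p _ => ih Y p.2 fun _ _ h => hφ ((h.left _).consLeaves _)
      _ = ∑ p ∈ antidiagonal s,
            spineSum posWeight c (p.2 + 1) (fun K => φ (consLeaves p.1 (node (K ++ Y) X))) +
          spineSum posWeight (X :: Y :: c) s φ := Finset.sum_add_distrib
      _ ≤ _ := by
          refine Nat.add_le_add_right ?_ _
          rw [spineSum, Finset.Nat.sum_antidiagonal_succ']
          exact (Finset.sum_le_sum fun p _ => spineSum_mono _ _ _ (hrot p.1)).trans
            (Nat.le_add_left _ _)

theorem spineSum_one_iterate_le (a : ℕ) (X : PlaneForest) (c : List PlaneForest) (s : ℕ)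
    {φ : PlaneForest → ℕ} (hφ : RotationMonotone φ) :
    spineSum 1 (X :: c) s (graftSum^[a] φ) ≤
      spineSum posWeight (X :: c) (s + 1) (graftSum^[a] (deleteEval φ)) := by
  induction a generalizing X c with
  | zero =>
    rw [Function.iterate_zero_apply, Function.iterate_zero_apply, spineSum_succ_deleteEval]
    exact spineSum_one_le X c s hφ
  | succ a ih =>
    simp only [Function.iterate_succ_apply', spineSum_graftSum]
    exact Nat.add_le_add (Finset.sum_le_sum fun X' _ => ih X' c) (ih nil (X :: c))

theorem iterate_graftSum_leaves_add_le (a s : ℕ) {φ : PlaneForest → ℕ} (hφ : RotationMonotone φ) :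
    graftSum^[a] (deleteEval φ) (consLeaves (s + 2) nil) +
        graftSum^[a + 1] φ (consLeaves s nil) ≤
      graftSum^[a + 1] (deleteEval φ) (consLeaves (s + 1) nil) := by
  simp only [Function.iterate_succ_apply', graftSum_leaves_eq_spineSum]
  rw [spineSum_one_singleton (s + 1)]
  exact Nat.add_le_add_left (spineSum_one_iterate_le a nil [] s hφ) _

end PlaneForest

/-! ### Histories along the boundary of a diagram -/

/-- The row lengths of the diagram that is left when the bottom row is removed together with one of
the columns through it. -/
def dropRow {n : ℕ} (b : Fin (n + 1) → ℕ) (y : Fin n) : ℕ := b y.succ - 1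

section dropRow

variable {n : ℕ} {b : Fin (n + 1) → ℕ}

theorem monotone_dropRow (hmono : Monotone b) : Monotone (dropRow b) := fun _ _ h =>
  Nat.sub_le_sub_right (hmono (Fin.succ_le_succ_iff.2 h)) 1

theorem dropRow_le (hle : ∀ y, b y ≤ n + 1) (y : Fin n) : dropRow b y ≤ n :=
  Nat.sub_le_of_le_add (hle y.succ)

theorem le_dropRow (hmono : Monotone b) {c : ℕ} (hc : c + 1 ≤ b 0) (y : Fin n) :
    c ≤ dropRow b y :=
  Nat.le_sub_of_add_le (hc.trans (hmono (Fin.zero_le _)))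

end dropRow

namespace PlaneForest

/-- The number of histories along the boundary of the diagram with row lengths `b`, starting from
the forest `F` on the first `F.size` columns: before each row is completed, roots are grafted until
the forest is as large as the row, and then the first root is deleted. -/
noncomputable def historyCount : {n : ℕ} → (Fin n → ℕ) → PlaneForest → ℕ
  | 0, _, _ => 1
  | _ + 1, b, F => graftSum^[b 0 - F.size] (deleteEval (historyCount (dropRow b))) F

theorem historyCount_rotationMonotone {n : ℕ} (b : Fin n → ℕ) :
    RotationMonotone (historyCount b) := by
  induction n with
  | zero => exact fun _ _ _ => le_rfl
  | succ n ih =>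
    intro F F' h
    simp only [historyCount, h.size_eq]
    exact (ih (dropRow b)).deleteEval.iterate_graftSum _ h

section historyCount

variable {n : ℕ} {b : Fin (n + 1) → ℕ}

theorem historyCount_eq_iterate {F : PlaneForest} {a : ℕ} (h : F.size + a = b 0) :
    historyCount b F = graftSum^[a] (deleteEval (historyCount (dropRow b))) F := by
  rw [historyCount, ← h, Nat.add_sub_cancel_left]

theorem graftSum_historyCount {F : PlaneForest} (h : F.size < b 0) :
    graftSum (historyCount b) F = historyCount b F := by
  obtain ⟨a, ha⟩ := Nat.exists_eq_add_of_lt h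
  rw [historyCount_eq_iterate (a := a + 1) ha.symm, Function.iterate_succ_apply']
  refine Finset.sum_congr rfl fun G hG => historyCount_eq_iterate ?_
  rw [size_of_mem_grafts hG, ha]
  ring

theorem iterate_graftSum_historyCount {F : PlaneForest} {a : ℕ} (h : F.size + a ≤ b 0) :
    graftSum^[a] (historyCount b) F = historyCount b F := by
  induction a generalizing F with
  | zero => rfl
  | succ a ih =>
    rw [Function.iterate_succ_apply', ← graftSum_historyCount (F := F) (by omega)]
    refine Finset.sum_congr rfl fun G hG => ih ?_
    rw [size_of_mem_grafts hG]
    omega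

theorem historyCount_leaves_of_full {s : ℕ} (hs : b 0 = s + 1) :
    historyCount b (consLeaves (s + 1) nil) = historyCount (dropRow b) (consLeaves s nil) :=
  historyCount_eq_iterate (a := 0) (by simp [hs])

theorem historyCount_nil (h : 0 < b 0) :
    historyCount b nil = historyCount b (consLeaves 1 nil) := by
  rw [← graftSum_historyCount (by simpa using h), graftSum_nil]
  rfl

theorem historyCount_leaves_add_le (hmono : Monotone b) (hle : ∀ y, b y ≤ n + 1) {s : ℕ}
    (hs : s + 1 < b 0) :
    historyCount b (consLeaves (s + 2) nil) + historyCount (dropRow b) (consLeaves s nil) ≤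
      historyCount b (consLeaves (s + 1) nil) := by
  obtain ⟨a, ha⟩ := Nat.exists_eq_add_of_lt hs
  obtain ⟨m, rfl⟩ : ∃ m, n = m + 1 := Nat.exists_eq_succ_of_ne_zero (by have := hle 0; omega)
  have hdrop : graftSum^[a + 1] (historyCount (dropRow b)) (consLeaves s nil) =
      historyCount (dropRow b) (consLeaves s nil) :=
    iterate_graftSum_historyCount (le_dropRow hmono (by simp; omega) 0)
  rw [historyCount_eq_iterate (a := a) (by simp; omega), ← hdrop,
    historyCount_eq_iterate (F := consLeaves (s + 1) nil) (a := a + 1) (by simp; omega)]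
  exact iterate_graftSum_leaves_add_le a s (historyCount_rotationMonotone _)

end historyCount

end PlaneForest

/-! ### Inserting the smallest value into a permutation -/

/-- The permutation whose value in column `p` is the smallest one, and whose other entries are in
the same relative order as the entries of `π`. -/
def insertMin {n : ℕ} (p : Fin (n + 1)) (π : Perm (Fin n)) : Perm (Fin (n + 1)) :=
  (finSuccEquiv' p).trans ((Equiv.optionCongr π).trans (finSuccEquiv' 0).symm)

section insertMin

variable {n : ℕ} (p : Fin (n + 1)) (π : Perm (Fin n))

@[simp] theorem insertMin_self : insertMin p π p = 0 := by simp [insertMin]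

@[simp] theorem insertMin_succAbove (i : Fin n) :
    insertMin p π (p.succAbove i) = (π i).succ := by
  simp [insertMin]

end insertMin

section card

variable {n : ℕ}

theorem insertMin_injective2 : Function.Injective2 (insertMin (n := n)) := by
  intro p q π ρ h
  obtain rfl : p = q := (insertMin p π).injective (by rw [insertMin_self, h, insertMin_self])
  refine ⟨rfl, Equiv.ext fun i => ?_⟩
  simpa using congrArg (fun σ : Perm (Fin (n + 1)) => σ (p.succAbove i)) h

theorem insertMin_bijective : Function.Bijective (Function.uncurry (insertMin (n := n))) := by
  rw [Fintype.bijective_iff_injective_and_card]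
  exact ⟨insertMin_injective2.uncurry, by simp [Fintype.card_perm, Nat.factorial_succ]⟩

theorem card_le_card_of_insertMin {S : Finset (Perm (Fin (n + 1)))} {T : Finset (Perm (Fin n))}
    (hST : ∀ p π, insertMin p π ∈ S → π ∈ T)
    (hS : ∀ p q π, insertMin p π ∈ S → insertMin q π ∈ S → p = q) : S.card ≤ T.card := by
  let e := Equiv.ofBijective _ (insertMin_bijective (n := n))
  have he (p : Fin (n + 1)) (π : Perm (Fin n)) : e.symm (insertMin p π) = (p, π) :=
    e.symm_apply_apply (p, π)
  refine Finset.card_le_card_of_injOn (fun σ => (e.symm σ).2) (fun σ hσ => ?_)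
    fun σ hσ τ hτ h => ?_
  · obtain ⟨⟨p, π⟩, rfl⟩ := e.surjective σ
    exact (congrArg (·.2 ∈ T) (he p π)).mpr (hST p π hσ)
  · obtain ⟨⟨p, π⟩, rfl⟩ := e.surjective σ
    obtain ⟨⟨q, ρ⟩, rfl⟩ := e.surjective τ
    obtain rfl : π = ρ := by simpa using h
    exact congrArg (insertMin · π) (hS p q π hσ hτ)

end card

/-! ### Transversals and patterns under insertion -/

theorem IsTransversal.pos {n : ℕ} {b : Fin n → ℕ} {π : Perm (Fin n)} (h : IsTransversal b π)
    (y : Fin n) : 0 < b y := by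
  simpa using (Nat.succ_pos _).trans_le (h (π.symm y))

theorem val_succAbove_lt_iff {n c : ℕ} {p : Fin (n + 1)} (hp : (p : ℕ) < c) (i : Fin n) :
    (p.succAbove i : ℕ) < c ↔ (i : ℕ) < c - 1 := by
  simp only [Fin.succAbove, Fin.lt_def, Fin.val_castSucc]
  split_ifs <;> simp only [Fin.val_castSucc, Fin.val_succ] <;> omega

/-- The columns `f` form an occurrence of the pattern `τ` in the transversal `π` of the diagram `b`,
so that `ContainsIn b π τ` states the existence of an occurrence. -/
def IsOccurrence {n k : ℕ} (b : Fin n → ℕ) (π : Perm (Fin n)) (τ : Perm (Fin k))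
    (f : Fin k → Fin n) : Prop :=
  StrictMono f ∧ (∀ s t, τ s < τ t ↔ π (f s) < π (f t)) ∧ ∀ s t, (f s : ℕ) + 1 ≤ b (π (f t))

section insertMinPattern

variable {n : ℕ} {b : Fin (n + 1) → ℕ} {p : Fin (n + 1)} {π : Perm (Fin n)}

theorem isTransversal_insertMin_iff (hmono : Monotone b) :
    IsTransversal b (insertMin p π) ↔ (p : ℕ) < b 0 ∧ IsTransversal (dropRow b) π := by
  simp only [IsTransversal, Fin.forall_iff_succAbove p, insertMin_self, insertMin_succAbove]
  refine and_congr_right fun hp => forall_congr' fun i => ?_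
  exact val_succAbove_lt_iff (Nat.lt_of_lt_of_le hp (hmono (Fin.zero_le _))) i

theorem isOccurrence_insertMin_iff (hmono : Monotone b) (hp : (p : ℕ) < b 0) {k : ℕ}
    {τ : Perm (Fin k)} {g : Fin k → Fin n} :
    IsOccurrence b (insertMin p π) τ (p.succAbove ∘ g) ↔ IsOccurrence (dropRow b) π τ g := by
  have hcell (s t : Fin k) : (p.succAbove (g s) : ℕ) + 1 ≤ b (π (g t)).succ ↔
      (g s : ℕ) + 1 ≤ dropRow b (π (g t)) :=
    val_succAbove_lt_iff (hp.trans_le (hmono (Fin.zero_le _))) (g s)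
  simp only [IsOccurrence, Function.comp_apply, insertMin_succAbove, Fin.succ_lt_succ_iff, hcell,
    StrictMono, Fin.succAbove_lt_succAbove_iff]

theorem ContainsIn.insertMin (hmono : Monotone b) (hp : (p : ℕ) < b 0) {k : ℕ} {τ : Perm (Fin k)} :
    ContainsIn (dropRow b) π τ → ContainsIn b (insertMin p π) τ
  | ⟨g, hg⟩ => ⟨p.succAbove ∘ g, (isOccurrence_insertMin_iff hmono hp).2 hg⟩

end insertMinPattern

/-- The corner of an occurrence of `321` is its last dot, hence lies in the diagram. -/
theorem containsIn_p321_of_lt {n : ℕ} {b : Fin n → ℕ} (hmono : Monotone b) {π : Perm (Fin n)}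
    (hπ : IsTransversal b π) {i k l : Fin n} (hik : i < k) (hkl : k < l) (hki : π k < π i)
    (hlk : π l < π k) : ContainsIn b π p321 := by
  have hcol (s : Fin 3) : ![i, k, l] s ≤ l := by
    fin_cases s <;> simp [hkl.le, (hik.trans hkl).le]
  have hrow (t : Fin 3) : π l ≤ π (![i, k, l] t) := by
    fin_cases t <;> simp [hlk.le, (hlk.trans hki).le]
  refine ⟨![i, k, l], ?_, fun s t => ?_, fun s t => ?_⟩
  · simp [Fin.strictMono_iff_lt_succ, Fin.forall_fin_two, hik, hkl]
  · have hli := hlk.trans hki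
    fin_cases s <;> fin_cases t <;> simp [p321, hki, hlk, hli, hki.le, hlk.le, hli.le]
  · exact (Nat.succ_le_succ (hcol s)).trans ((hπ l).trans (hmono (hrow t)))

/-! ### Transversals avoiding `321` -/

open Classical in
/-- The `321`-avoiding transversals that are increasing on the first `j` columns. -/
noncomputable def increasingAvoiders {n : ℕ} (b : Fin n → ℕ) (j : ℕ) : Finset (Perm (Fin n)) :=
  {π | IsTransversal b π ∧ ¬ ContainsIn b π p321 ∧ StrictMonoOn π {i | (i : ℕ) < j}}

theorem mem_increasingAvoiders {n : ℕ} {b : Fin n → ℕ} {j : ℕ} {π : Perm (Fin n)} :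
    π ∈ increasingAvoiders b j ↔
      IsTransversal b π ∧ ¬ ContainsIn b π p321 ∧ StrictMonoOn π {i | (i : ℕ) < j} := by
  simp [increasingAvoiders]

theorem increasingAvoiders_zero {n : ℕ} (b : Fin n → ℕ) :
    increasingAvoiders b 0 = increasingAvoiders b 1 := by
  have hincr (j : ℕ) (hj : j ≤ 1) (π : Perm (Fin n)) : StrictMonoOn π {i | (i : ℕ) < j} :=
    fun _ _ k (hk : (k : ℕ) < j) hik => absurd (Nat.lt_of_le_of_lt (Nat.zero_le _) hik) (by omega)
  ext π
  simp only [mem_increasingAvoiders, hincr 0 zero_le_one, hincr 1 le_rfl]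

theorem strictMonoOn_of_castSucc_lt_succ {α : Type*} [Preorder α] {n : ℕ} {f : Fin (n + 1) → α}
    {k : Fin n} (hf : StrictMonoOn f {i | (i : ℕ) < k + 1}) (hk : f k.castSucc < f k.succ) :
    StrictMonoOn f {i | (i : ℕ) < k + 2} := by
  intro i _ l (hl : (l : ℕ) < k + 2) (hil : (i : ℕ) < l)
  rcases Nat.lt_succ_iff_lt_or_eq.1 hl with hl | hl
  · exact hf (hil.trans hl) hl hil
  · obtain rfl : l = k.succ := Fin.ext hl
    have hik : i ≤ k.castSucc := Nat.lt_succ_iff.1 hil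
    exact (hf.monotoneOn hil (Nat.lt_succ_self k) hik).trans_lt hk

section increasingAvoiders

variable {n : ℕ} {b : Fin (n + 1) → ℕ} {p : Fin (n + 1)} {π : Perm (Fin n)}

theorem mem_increasingAvoiders_of_insertMin (hmono : Monotone b) {j : ℕ}
    (h : insertMin p π ∈ increasingAvoiders b (j + 1)) : π ∈ increasingAvoiders (dropRow b) j := by
  obtain ⟨htrans, havoid, hincr⟩ := mem_increasingAvoiders.1 h
  obtain ⟨hp, hπ⟩ := (isTransversal_insertMin_iff hmono).1 htrans
  refine mem_increasingAvoiders.2 ⟨hπ, fun hc => havoid (hc.insertMin hmono hp), ?_⟩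
  have hcol {i : Fin n} (hi : (i : ℕ) < j) : (p.succAbove i : ℕ) < j + 1 := by
    simp only [Fin.succAbove]
    split_ifs <;> simp only [Fin.val_castSucc, Fin.val_succ] <;> omega
  intro i hi k hk hik
  simpa using hincr (hcol hi) (hcol hk) (Fin.strictMono_succAbove p hik)

theorem eq_zero_of_strictMonoOn_insertMin {j : ℕ}
    (h : StrictMonoOn (insertMin p π) {i | (i : ℕ) < j}) (hp : (p : ℕ) < j) : p = 0 := by
  by_contra hne
  have hpos := Fin.pos_iff_ne_zero.2 hne
  simpa using h (Nat.lt_trans hpos hp) hp hpos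

theorem card_increasingAvoiders_le_of_full (hmono : Monotone b) {s : ℕ} (hs : b 0 ≤ s + 1) :
    (increasingAvoiders b (s + 1)).card ≤ (increasingAvoiders (dropRow b) s).card := by
  have hzero {p : Fin (n + 1)} {π : Perm (Fin n)}
      (h : insertMin p π ∈ increasingAvoiders b (s + 1)) : p = 0 := by
    obtain ⟨htrans, -, hincr⟩ := mem_increasingAvoiders.1 h
    exact eq_zero_of_strictMonoOn_insertMin hincr
      (((isTransversal_insertMin_iff hmono).1 htrans).1.trans_le hs)
  exact card_le_card_of_insertMin (fun _ _ => mem_increasingAvoiders_of_insertMin hmono)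
    fun _ _ _ hp hq => (hzero hp).trans (hzero hq).symm

variable {k : Fin n}

theorem apply_succ_lt_of_mem_sdiff {σ : Perm (Fin (n + 1))}
    (h : σ ∈ increasingAvoiders b (k + 1) \ increasingAvoiders b (k + 2)) :
    σ k.succ < σ k.castSucc := by
  simp only [Finset.mem_sdiff, mem_increasingAvoiders] at h
  obtain ⟨⟨htrans, havoid, hincr⟩, hnot⟩ := h
  by_contra hle
  have hne : σ k.castSucc ≠ σ k.succ := σ.injective.ne k.castSucc_lt_succ.ne
  exact hnot ⟨htrans, havoid,
    strictMonoOn_of_castSucc_lt_succ hincr ((not_lt.1 hle).lt_of_ne hne)⟩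

theorem eq_zero_or_eq_succ_of_mem_sdiff (hmono : Monotone b)
    (h : insertMin p π ∈ increasingAvoiders b (k + 1) \ increasingAvoiders b (k + 2)) :
    p = 0 ∨ p = k.succ := by
  have hdesc := apply_succ_lt_of_mem_sdiff h
  obtain ⟨htrans, havoid, hincr⟩ := mem_increasingAvoiders.1 (Finset.mem_sdiff.1 h).1
  rcases lt_trichotomy p k.succ with hp | hp | hp
  · exact .inl (eq_zero_of_strictMonoOn_insertMin hincr hp)
  · exact .inr hp
  · refine absurd (containsIn_p321_of_lt hmono htrans k.castSucc_lt_succ hp hdesc ?_) havoid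
    rw [insertMin_self, Fin.pos_iff_ne_zero]
    exact fun h0 => hp.ne ((insertMin p π).injective (h0.trans (insertMin_self p π).symm))

/-- If the smallest value is in the first column, the remaining permutation has a descent at the
columns that are increasing if the smallest value is at the bottom of the descent. -/
theorem not_mem_sdiff_zero_and_succ
    (h0 : insertMin 0 π ∈ increasingAvoiders b (k + 1) \ increasingAvoiders b (k + 2))
    (hk : insertMin k.succ π ∈ increasingAvoiders b (k + 1)) : False := by
  have hdesc := apply_succ_lt_of_mem_sdiff h0
  obtain hk0 | ⟨k', hk'⟩ := Fin.eq_self_or_eq_succAbove 0 k.castSucc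
  · simp [hk0] at hdesc
  · have hlt : k' < k := by
      rw [Fin.zero_succAbove] at hk'
      exact Fin.lt_def.2 (by simpa using (congrArg Fin.val hk').ge)
    rw [hk', ← Fin.zero_succAbove k, insertMin_succAbove, insertMin_succAbove] at hdesc
    have hcol {i : Fin n} (hi : i ≤ k) : (k.succ.succAbove i : ℕ) < k + 1 :=
      (Fin.succAbove_lt_iff_succ_le _ _).2 (Fin.succ_le_succ_iff.2 hi)
    have hasc := (mem_increasingAvoiders.1 hk).2.2 (hcol hlt.le) (hcol le_rfl)
      (Fin.strictMono_succAbove _ hlt)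
    rw [insertMin_succAbove, insertMin_succAbove] at hasc
    exact hasc.asymm hdesc

theorem card_increasingAvoiders_le_add (hmono : Monotone b) (k : Fin n) :
    (increasingAvoiders b (k + 1)).card ≤
      (increasingAvoiders b (k + 2)).card + (increasingAvoiders (dropRow b) k).card := by
  have hdesc : (increasingAvoiders b (k + 1) \ increasingAvoiders b (k + 2)).card ≤
      (increasingAvoiders (dropRow b) k).card := by
    refine card_le_card_of_insertMin (fun p π h => ?_) fun p q π hp hq => ?_
    · exact mem_increasingAvoiders_of_insertMin hmono (Finset.mem_sdiff.1 h).1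
    · rcases eq_zero_or_eq_succ_of_mem_sdiff hmono hp with rfl | rfl <;>
        rcases eq_zero_or_eq_succ_of_mem_sdiff hmono hq with rfl | rfl
      · rfl
      · exact (not_mem_sdiff_zero_and_succ hp (Finset.mem_sdiff.1 hq).1).elim
      · exact (not_mem_sdiff_zero_and_succ hq (Finset.mem_sdiff.1 hp).1).elim
      · rfl
  have hsplit := Finset.card_le_card_sdiff_add_card (s := increasingAvoiders b (k + 1))
    (t := increasingAvoiders b (k + 2))
  omega

end increasingAvoiders

open PlaneForest

theorem card_increasingAvoiders_le_historyCount {n : ℕ} {b : Fin n → ℕ} (hmono : Monotone b)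
    (hle : ∀ y, b y ≤ n) {j : ℕ} (hj : ∀ y, j ≤ b y) :
    (increasingAvoiders b j).card ≤ historyCount b (consLeaves j nil) := by
  induction n generalizing j with
  | zero => exact Finset.card_le_one_of_subsingleton _
  | succ n ih =>
    have hdrop {s : ℕ} (hs : s + 1 ≤ b 0) : (increasingAvoiders (dropRow b) s).card ≤
        historyCount (dropRow b) (consLeaves s nil) :=
      ih (monotone_dropRow hmono) (dropRow_le hle) (le_dropRow hmono hs)
    obtain ⟨a, ha⟩ := Nat.exists_eq_add_of_le (hj 0)
    clear hj
    induction a generalizing j with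
    | zero =>
      cases j with
      | zero =>
        have hempty : increasingAvoiders b 0 = ∅ := Finset.eq_empty_of_forall_notMem fun π hπ =>
          (mem_increasingAvoiders.1 hπ).1.pos 0 |>.ne' ha
        simp [hempty]
      | succ s =>
        rw [historyCount_leaves_of_full ha]
        exact (card_increasingAvoiders_le_of_full hmono ha.le).trans (hdrop ha.ge)
    | succ a iha =>
      have hnext := iha (j := j + 1) (by omega)
      cases j with
      | zero => rwa [increasingAvoiders_zero, consLeaves_zero, historyCount_nil (by omega)]
      | succ s =>
        have hs : s < n := by have := hle 0; omega
        calc (increasingAvoiders b (s + 1)).card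
            ≤ (increasingAvoiders b (s + 2)).card + (increasingAvoiders (dropRow b) s).card :=
              card_increasingAvoiders_le_add hmono ⟨s, hs⟩
          _ ≤ historyCount b (consLeaves (s + 2) nil) +
                historyCount (dropRow b) (consLeaves s nil) :=
              Nat.add_le_add hnext (hdrop (by omega))
          _ ≤ historyCount b (consLeaves (s + 1) nil) :=
              historyCount_leaves_add_le hmono hle (by omega)

/-! ### Words with the shape of a plane forest -/

namespace PlaneForest

/-- The first `F.size` letters of `v` form a `312`-avoiding word whose relative order is encoded by
the forest `F`: positions are read in postorder and values in preorder. For `node L R`, the root of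
the first tree sits in position `L.size`; its letter is below those in front of it, and all of these
are below those of `R`. -/
def HasShape {α : Type*} [LT α] : PlaneForest → (ℕ → α) → Prop
  | nil, _ => True
  | node L R, v => L.HasShape v ∧ R.HasShape (fun i => v (L.size + 1 + i)) ∧
      (∀ i < L.size, v L.size < v i) ∧ ∀ i ≤ L.size, ∀ k < R.size, v i < v (L.size + 1 + k)

namespace HasShape

variable {α β : Type*} {F G : PlaneForest}

theorem congr [LT α] [LT β] {v : ℕ → α} {w : ℕ → β} (h : F.HasShape v)
    (hvw : ∀ i < F.size, ∀ k < F.size, v i < v k → w i < w k) : F.HasShape w := by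
  induction F generalizing v w with
  | nil => trivial
  | node L R ihL ihR =>
    obtain ⟨hL, hR, hroot, hlt⟩ := h
    simp only [size_node] at hvw
    exact ⟨ihL hL fun i hi k hk => hvw i (by omega) k (by omega),
      ihR hR fun i hi k hk => hvw _ (by omega) _ (by omega),
      fun i hi => hvw _ (by omega) _ (by omega) (hroot i hi),
      fun i hi k hk => hvw _ (by omega) _ (by omega) (hlt i hi k hk)⟩

theorem root_lt [LT α] {L R : PlaneForest} {v : ℕ → α} (h : (node L R).HasShape v) {i : ℕ}
    (hi : i < (node L R).size) (hne : i ≠ L.size) : v L.size < v i := by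
  obtain ⟨-, -, hroot, hlt⟩ := h
  rcases hne.lt_or_gt with hi' | hi'
  · exact hroot i hi'
  · obtain ⟨k, rfl⟩ := Nat.exists_eq_add_of_le (Nat.succ_le_of_lt hi')
    exact hlt _ le_rfl k (by simp only [size_node] at hi; omega)

theorem unique [Preorder α] {v : ℕ → α} (hF : F.HasShape v) (hG : G.HasShape v)
    (h : F.size = G.size) : F = G := by
  induction F generalizing v G with
  | nil =>
    cases G with
    | nil => rfl
    | node L R => simp at h
  | node L R ihL ihR =>
    cases G with
    | nil => simp at h
    | node L' R' =>
      simp only [size_node] at h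
      have hsize : L.size = L'.size := by
        by_contra hne
        exact (hF.root_lt (by simp only [size_node]; omega) (Ne.symm hne)).asymm
          (hG.root_lt (by simp only [size_node]; omega) hne)
      obtain rfl := ihL hF.1 hG.1 hsize
      obtain rfl := ihR hF.2.1 hG.2.1 (by omega)
      rfl

theorem of_append [LT α] {A B : PlaneForest} {v : ℕ → α} (h : (A ++ B).HasShape v) :
    A.HasShape v ∧ B.HasShape (fun i => v (A.size + i)) ∧
      ∀ i < A.size, ∀ k < B.size, v i < v (A.size + k) := by
  induction A generalizing v with
  | nil => exact ⟨trivial, by simpa using h, fun i hi => absurd hi i.not_lt_zero⟩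
  | node L R _ ih =>
    rw [node_append] at h
    obtain ⟨hL, hRB, hroot, hlt⟩ := h
    obtain ⟨hR, hB, hltB⟩ := ih hRB
    rw [size_append] at hlt
    have hadd (k : ℕ) : (node L R).size + k = L.size + 1 + (R.size + k) := by
      simp only [size_node]; omega
    refine ⟨⟨hL, hR, hroot, fun i hi k hk => hlt i hi k (by omega)⟩, ?_, fun i hi k hk => ?_⟩
    · simpa only [hadd] using hB
    · rw [hadd]
      rcases Nat.lt_or_ge L.size i with hi' | hi'
      · obtain ⟨m, rfl⟩ := Nat.exists_eq_add_of_le (Nat.succ_le_of_lt hi')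
        exact hltB m (by simp only [size_node] at hi; omega) k hk
      · exact hlt i hi' (R.size + k) (by omega)

theorem of_mem_grafts [LT α] {v : ℕ → α} (hGF : G ∈ F.grafts) (h : G.HasShape v) :
    F.HasShape v := by
  induction F generalizing v G with
  | nil => trivial
  | node L R _ ih =>
    obtain rfl | ⟨B, hB, rfl⟩ := mem_grafts_node.1 hGF
    · exact h.1
    · obtain ⟨hL, hR, hroot, hlt⟩ := h
      refine ⟨hL, ih hB hR, hroot, fun i hi k hk => hlt i hi k ?_⟩
      rw [size_of_mem_grafts hB]
      omega

end HasShape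

end PlaneForest

/-- The values of `π` as an infinite word, with the junk value `0` beyond position `n`. -/
def word {n : ℕ} (π : Perm (Fin n)) (i : ℕ) : ℕ := if h : i < n then π ⟨i, h⟩ else 0

section word

variable {n : ℕ} {p : Fin (n + 1)} {π : Perm (Fin n)} {i : ℕ}

@[simp] theorem word_val (π : Perm (Fin n)) (i : Fin n) : word π i = π i := by simp [word]

theorem word_insertMin_self (p : Fin (n + 1)) (π : Perm (Fin n)) : word (insertMin p π) p = 0 := by
  simp

theorem word_insertMin_of_lt (hi : i < p) : word (insertMin p π) i = word π i + 1 := by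
  lift i to Fin n using by omega
  have hcol : (i : ℕ) = p.succAbove i := by
    rw [Fin.succAbove_of_castSucc_lt _ _ hi, Fin.val_castSucc]
  rw [word_val, hcol, word_val, insertMin_succAbove, Fin.val_succ]

theorem word_insertMin_of_ge (hpi : p ≤ i) (hi : i < n) :
    word (insertMin p π) (i + 1) = word π i + 1 := by
  lift i to Fin n using hi
  have hcol : (i : ℕ) + 1 = p.succAbove i := by
    rw [Fin.succAbove_of_le_castSucc _ _ hpi, Fin.val_succ]
  rw [word_val, hcol, word_val, insertMin_succAbove, Fin.val_succ]

theorem PlaneForest.HasShape.insertMin {A B : PlaneForest} (hp : (p : ℕ) = A.size)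
    (hn : A.size + B.size ≤ n) (h : (A ++ B).HasShape (word π)) :
    (node A B).HasShape (word (insertMin p π)) := by
  obtain ⟨hA, hB, hlt⟩ := h.of_append
  have hleft {i : ℕ} (hi : i < A.size) : word (_root_.insertMin p π) i = word π i + 1 :=
    word_insertMin_of_lt (by omega)
  have hroot : word (_root_.insertMin p π) A.size = 0 := by rw [← hp, word_insertMin_self]
  have hright {k : ℕ} (hk : k < B.size) :
      word (_root_.insertMin p π) (A.size + 1 + k) = word π (A.size + k) + 1 := by
    rw [add_right_comm, word_insertMin_of_ge (by omega) (by omega)]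
  refine ⟨hA.congr fun i hi k hk => ?_, hB.congr fun i hi k hk => ?_, fun i hi => ?_,
    fun i hi k hk => ?_⟩
  · rw [hleft hi, hleft hk]
    exact Nat.succ_lt_succ
  · rw [hright hi, hright hk]
    exact Nat.succ_lt_succ
  · rw [hroot, hleft hi]
    exact Nat.succ_pos _
  · rw [hright hk]
    rcases hi.lt_or_eq with hi | rfl
    · rw [hleft hi]
      exact Nat.succ_lt_succ (hlt i hi k hk)
    · rw [hroot]
      exact Nat.succ_pos _

end word

/-! ### Transversals avoiding `312` -/

open Classical in
/-- The `312`-avoiding transversals whose first `F.size` entries have the shape `F`. -/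
noncomputable def shapedAvoiders {n : ℕ} (b : Fin n → ℕ) (F : PlaneForest) :
    Finset (Perm (Fin n)) :=
  {π | IsTransversal b π ∧ ¬ ContainsIn b π p312 ∧ F.HasShape (word π)}

theorem mem_shapedAvoiders {n : ℕ} {b : Fin n → ℕ} {F : PlaneForest} {π : Perm (Fin n)} :
    π ∈ shapedAvoiders b F ↔
      IsTransversal b π ∧ ¬ ContainsIn b π p312 ∧ F.HasShape (word π) := by
  simp [shapedAvoiders]

theorem graftSum_card_shapedAvoiders_le {n : ℕ} (b : Fin n → ℕ) (F : PlaneForest) :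
    graftSum (fun G => (shapedAvoiders b G).card) F ≤ (shapedAvoiders b F).card := by
  classical
  have hdisj : ∀ G ∈ F.grafts, ∀ H ∈ F.grafts, G ≠ H →
      Disjoint (shapedAvoiders b G) (shapedAvoiders b H) := by
    refine fun G hG H hH hne => Finset.disjoint_left.2 fun π hπG hπH => hne ?_
    exact (mem_shapedAvoiders.1 hπG).2.2.unique (mem_shapedAvoiders.1 hπH).2.2
      ((size_of_mem_grafts hG).trans (size_of_mem_grafts hH).symm)
  rw [graftSum, ← Finset.card_biUnion hdisj]
  refine Finset.card_le_card (Finset.biUnion_subset.2 fun G hG π hπ => ?_)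
  obtain ⟨htrans, havoid, hshape⟩ := mem_shapedAvoiders.1 hπ
  exact mem_shapedAvoiders.2 ⟨htrans, havoid, hshape.of_mem_grafts hG⟩

section insertMin

variable {n : ℕ} {b : Fin (n + 1) → ℕ} {p : Fin (n + 1)} {π : Perm (Fin n)} {A B : PlaneForest}

/-- In an occurrence that uses the smallest value, the corner is in the bottom row, so that all its
columns belong to the initial word of shape `node A B`. -/
theorem not_containsIn_p312_insertMin (hmono : Monotone b) (hp : (p : ℕ) = A.size)
    (hsize : (node A B).size = b 0) (hshape : (node A B).HasShape (word (insertMin p π)))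
    (havoid : ¬ ContainsIn (dropRow b) π p312) : ¬ ContainsIn b (insertMin p π) p312 := by
  rintro ⟨f, hf⟩
  rw [size_node] at hsize
  by_cases hmem : ∃ t, f t = p
  · obtain ⟨t, ht⟩ := hmem
    obtain ⟨hincr, hpattern, hcell⟩ := hf
    obtain rfl : t = 1 := by
      by_contra hne
      have hmin : ∀ t ≠ 1, p312 1 < p312 t := by decide
      simpa [ht] using (hpattern 1 t).1 (hmin t hne)
    have h01 : f 0 < p := ht ▸ hincr (by decide)
    have h12 : p < f 2 := ht ▸ hincr (by decide)
    have h2 := hcell 2 1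
    rw [ht, insertMin_self] at h2
    obtain ⟨k, hk⟩ : ∃ k, (f 2 : ℕ) = A.size + 1 + k :=
      Nat.exists_eq_add_of_le (hp ▸ h12)
    have hlt := hshape.2.2.2 (f 0) (hp ▸ h01.le) k (by omega)
    rw [← hk, word_val, word_val] at hlt
    exact hlt.asymm ((hpattern 2 0).1 (by decide))
  · choose g hg using fun t => Fin.exists_succAbove_eq fun h => hmem ⟨t, h⟩
    obtain rfl : p.succAbove ∘ g = f := funext hg
    exact havoid ⟨g, (isOccurrence_insertMin_iff hmono (by omega)).1 hf⟩

theorem card_shapedAvoiders_append_le (hmono : Monotone b) (hle : b 0 ≤ n + 1)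
    (hsize : (node A B).size = b 0) :
    (shapedAvoiders (dropRow b) (A ++ B)).card ≤ (shapedAvoiders b (node A B)).card := by
  have hsize' : A.size + B.size + 1 = b 0 := hsize
  refine Finset.card_le_card_of_injOn (insertMin ⟨A.size, by omega⟩) (fun π hπ => ?_)
    fun π _ ρ _ h => (insertMin_injective2 h).2
  obtain ⟨htrans, havoid, hshape⟩ := mem_shapedAvoiders.1 hπ
  have hnode : (node A B).HasShape (word (insertMin ⟨A.size, by omega⟩ π)) :=
    hshape.insertMin rfl (by omega)
  refine mem_shapedAvoiders.2 ⟨(isTransversal_insertMin_iff hmono).2 ⟨?_, htrans⟩,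
    not_containsIn_p312_insertMin hmono rfl hsize hnode havoid, hnode⟩
  simp only
  omega

end insertMin

theorem historyCount_le_card_shapedAvoiders {n : ℕ} {b : Fin n → ℕ} (hmono : Monotone b)
    (hle : ∀ y, b y ≤ n) {F : PlaneForest} (hFn : F.size ≤ n) (hF : ∀ y, F.size ≤ b y) :
    historyCount b F ≤ (shapedAvoiders b F).card := by
  induction n generalizing F with
  | zero =>
    cases F with
    | nil =>
      refine Finset.card_pos.2 ⟨1, mem_shapedAvoiders.2 ⟨fun i => i.elim0, ?_, trivial⟩⟩
      exact fun ⟨f, _⟩ => (f 0).elim0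
    | node L R => simp at hFn
  | succ n ih =>
    obtain ⟨a, ha⟩ := Nat.exists_eq_add_of_le (hF 0)
    clear hF hFn
    rw [historyCount_eq_iterate ha.symm]
    induction a generalizing F with
    | zero =>
      cases F with
      | nil => exact Nat.zero_le _
      | node A B =>
        have hb0 : (A ++ B).size + 1 = b 0 := by rw [size_append, ha]; rfl
        refine (ih (monotone_dropRow hmono) (dropRow_le hle) ?_
          (le_dropRow hmono hb0.le)).trans (card_shapedAvoiders_append_le hmono (hle 0) ha.symm)
        have := hle 0
        omega
    | succ a iha =>
      rw [Function.iterate_succ_apply']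
      refine le_trans (Finset.sum_le_sum fun G hG => iha ?_) (graftSum_card_shapedAvoiders_le b F)
      rw [size_of_mem_grafts hG]
      omega

theorem SYcard_eq_card {n k : ℕ} (b : Fin n → ℕ) (τ : Perm (Fin k)) {S : Finset (Perm (Fin n))}
    (hS : ∀ π, π ∈ S ↔ IsTransversal b π ∧ ¬ ContainsIn b π τ) : SYcard b τ = S.card :=
  Nat.subtype_card S hS

theorem stmt13 (n : ℕ) (b : Fin n → ℕ) (hmono : Monotone b)
    (hb : ∀ y : Fin n, (y : ℕ) + 1 ≤ b y ∧ b y ≤ n) :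
    SYcard b p321 ≤ SYcard b p312 := by
  have hle (y : Fin n) : b y ≤ n := (hb y).2
  calc SYcard b p321 = (increasingAvoiders b 0).card :=
        SYcard_eq_card b p321 fun π => by simp [mem_increasingAvoiders, StrictMonoOn]
    _ ≤ historyCount b nil :=
        card_increasingAvoiders_le_historyCount hmono hle fun _ => Nat.zero_le _
    _ ≤ (shapedAvoiders b nil).card :=
        historyCount_le_card_shapedAvoiders hmono hle (Nat.zero_le _) fun _ => Nat.zero_le _
    _ = SYcard b p312 := by
        refine (SYcard_eq_card b p312 fun π => ?_).symm
        rw [mem_shapedAvoiders, HasShape, and_true]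
end

section
/- For every n ≥ 2, |S_{Y_n}(213)| = c_n − c_{n−2}. -/
open Equiv

/-- The Young diagram `Y_n`: the square `M_n` minus its bottom-right cell. -/
def bYn (n : ℕ) : Fin n → ℕ := fun y => if (y : ℕ) = 0 then n - 1 else n

/-!
Delete the dot in the bottom row: a permutation `π` of length `n + 1` with `π p = 0` becomes a
permutation `σ` of length `n`. An occurrence of `213` in `π` either lives in `σ` or has `0` as its
middle entry, so `π` avoids `213` iff `σ` does and the first `p` entries of `σ` exceed all the
others, that is, `σ` is a block sum `(σ₁|σ₂)` of avoiders of lengths `p` and `n - p`. Summing over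
`p` gives the Catalan recursion.

In `Y_{n+1}` the occurrences through the bottom row must moreover end before the last column. So the
first `p` entries of `σ` need to exceed only the later entries *other than the last one*. If there
is such a later entry `σ q`, the last entry is handled as well: `σ q < σ i < σ last` would be an
occurrence of `213`. Hence only `p = n - 1` and `p = n` behave differently from the square: for
`p = n - 1` every avoider `σ` is allowed, which raises `c_{n-1} c_1` to `c_n`, and for `p = n` there
is no transversal, which lowers `c_n c_0` to `0`. The net loss is `c_{n-1}`.
-/

section Occurrences

variable {α β γ δ : Type*}

/-- The entries of the word `f` at `i`, `j`, `k` form an occurrence of the pattern `213`. -/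
structure Is213 [LT α] [LT β] (f : α → β) (i j k : α) : Prop where
  left_lt_mid : i < j
  mid_lt_right : j < k
  apply_mid_lt : f j < f i
  apply_lt_right : f i < f k

lemma is213_comp_iff [LT α] [LT β] [LT γ] [LT δ] {f : α → β} {g : γ → δ} {e : α → γ}
    (he : ∀ x y, e x < e y ↔ x < y) (hg : ∀ x y, g (e x) < g (e y) ↔ f x < f y) {i j k : α} :
    Is213 g (e i) (e j) (e k) ↔ Is213 f i j k :=
  ⟨fun h => ⟨(he _ _).1 h.1, (he _ _).1 h.2, (hg _ _).1 h.3, (hg _ _).1 h.4⟩,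
    fun h => ⟨(he _ _).2 h.1, (he _ _).2 h.2, (hg _ _).2 h.3, (hg _ _).2 h.4⟩⟩

end Occurrences

lemma containsIn_p213_iff {n : ℕ} {b : Fin n → ℕ} (hb : Monotone b) {π : Perm (Fin n)} :
    ContainsIn b π p213 ↔ ∃ i j k, Is213 π i j k ∧ (k : ℕ) + 1 ≤ b (π j) := by
  constructor
  · rintro ⟨f, hf, hord, hY⟩
    exact ⟨f 0, f 1, f 2, ⟨hf (by decide), hf (by decide), (hord 1 0).1 (by decide),
      (hord 0 2).1 (by decide)⟩, hY 2 1⟩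
  · rintro ⟨i, j, k, ⟨hij, hjk, hji, hik⟩, hY⟩
    refine ⟨![i, j, k], by simp [hij, hjk], ?_, fun s t => ?_⟩
    · simp [Fin.forall_fin_succ, p213, hji, hik, hji.trans hik, hji.le, hik.le, (hji.trans hik).le]
    · have hcol : ![i, j, k] s ≤ k := by
        fin_cases s
        exacts [(hij.trans hjk).le, hjk.le, le_rfl]
      have hrow : π j ≤ π (![i, j, k] t) := by
        fin_cases t
        exacts [hji.le, le_rfl, (hji.trans hik).le]
      exact (Nat.succ_le_succ hcol).trans (hY.trans (hb hrow))

lemma isTransversal_const {n : ℕ} (π : Perm (Fin n)) : IsTransversal (fun _ => n) π :=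
  fun i => i.2

lemma containsIn_const_iff {n k : ℕ} {π : Perm (Fin n)} {τ : Perm (Fin k)} :
    ContainsIn (fun _ => n) π τ ↔ ContainsPat π τ :=
  exists_congr fun f => and_congr_right fun _ => and_iff_left fun s _ => (f s).2

lemma SYcard_const (n : ℕ) {k : ℕ} (τ : Perm (Fin k)) :
    SYcard (fun _ : Fin n => n) τ = SnCard n τ := by
  simp only [SYcard, SnCard, isTransversal_const, true_and, containsIn_const_iff]

lemma containsPat_p213_iff {n : ℕ} {π : Perm (Fin n)} :
    ContainsPat π p213 ↔ ∃ i j k, Is213 π i j k := by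
  rw [← containsIn_const_iff, containsIn_p213_iff monotone_const]
  simp only [Nat.succ_le_iff, Fin.is_lt, and_true]

section InsertValue

variable {n : ℕ}

/-- The permutation obtained from the word `σ` by inserting an entry `v` at position `p`, where the
old entries that are at least `v` are raised by one. -/
def insertValue (p v : Fin (n + 1)) (σ : Perm (Fin n)) : Perm (Fin (n + 1)) :=
  ((finSuccEquiv' p).trans σ.optionCongr).trans (finSuccEquiv' v).symm

@[simp]
lemma insertValue_apply_self (p v : Fin (n + 1)) (σ : Perm (Fin n)) : insertValue p v σ p = v := by
  simp [insertValue]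

@[simp]
lemma insertValue_apply_succAbove (p v : Fin (n + 1)) (σ : Perm (Fin n)) (i : Fin n) :
    insertValue p v σ (p.succAbove i) = v.succAbove (σ i) := by
  simp [insertValue]

lemma insertValue_apply_eq_iff {p v : Fin (n + 1)} {σ : Perm (Fin n)} {x : Fin (n + 1)} :
    insertValue p v σ x = v ↔ x = p := by
  rw [← (insertValue p v σ).apply_eq_iff_eq (x := x), insertValue_apply_self]

lemma insertValue_bijective (v : Fin (n + 1)) :
    Function.Bijective fun x : Fin (n + 1) × Perm (Fin n) => insertValue x.1 v x.2 := by
  rw [Fintype.bijective_iff_injective_and_card]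
  refine ⟨?_, by simp [Fintype.card_perm, Nat.factorial_succ]⟩
  rintro ⟨p, σ⟩ ⟨q, τ⟩ (h : insertValue p v σ = insertValue q v τ)
  obtain rfl : p = q := by
    rw [← insertValue_apply_eq_iff (v := v) (σ := τ), ← h, insertValue_apply_self]
  have hστ (i : Fin n) : σ i = τ i := by
    simpa using DFunLike.congr_fun h (p.succAbove i)
  rw [Equiv.ext hστ]

lemma card_perm_subtype_eq_sum_insertValue (v : Fin (n + 1)) (P : Perm (Fin (n + 1)) → Prop) :
    Nat.card {π // P π} = ∑ p, Nat.card {σ // P (insertValue p v σ)} := by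
  rw [← Nat.card_sigma]
  exact Nat.card_congr (((Equiv.ofBijective _ (insertValue_bijective v)).subtypeEquiv
    fun _ => Iff.rfl).symm.trans (subtypeProdEquivSigmaSubtype fun p σ => P (insertValue p v σ)))

lemma is213_insertValue_succAbove_iff {p v : Fin (n + 1)} {σ : Perm (Fin n)} {i j k : Fin n} :
    Is213 (insertValue p v σ) (p.succAbove i) (p.succAbove j) (p.succAbove k) ↔ Is213 σ i j k :=
  is213_comp_iff (by simp) (by simp)

lemma is213_insertValue_zero_self_iff {p : Fin (n + 1)} {σ : Perm (Fin n)} {i k : Fin n} :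
    Is213 (insertValue p 0 σ) (p.succAbove i) p (p.succAbove k) ↔
      (i : ℕ) < p ∧ (p : ℕ) ≤ k ∧ σ i < σ k := by
  constructor
  · rintro ⟨hi, hk, -, hik⟩
    exact ⟨(Fin.succAbove_lt_iff_castSucc_lt _ _).1 hi,
      (Fin.lt_succAbove_iff_le_castSucc _ _).1 hk, by simpa using hik⟩
  · rintro ⟨hi, hk, hik⟩
    exact ⟨(Fin.succAbove_lt_iff_castSucc_lt _ _).2 hi,
      (Fin.lt_succAbove_iff_le_castSucc _ _).2 hk, by simp, by simpa using hik⟩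

lemma containsIn_insertValue_zero_p213_iff {b : Fin (n + 1) → ℕ} (hb : Monotone b)
    {p : Fin (n + 1)} {σ : Perm (Fin n)} :
    ContainsIn b (insertValue p 0 σ) p213 ↔
      (∃ i j k, Is213 σ i j k ∧ (p.succAbove k : ℕ) + 1 ≤ b (σ j).succ) ∨
        ∃ i k : Fin n, ((i : ℕ) < p ∧ (p : ℕ) ≤ k ∧ σ i < σ k) ∧ (k : ℕ) + 2 ≤ b 0 := by
  have hend {k : Fin n} (hk : (p : ℕ) ≤ k) : (p.succAbove k : ℕ) = k + 1 := by
    rw [Fin.succAbove_of_le_castSucc _ _ hk, Fin.val_succ]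
  rw [containsIn_p213_iff hb]
  constructor
  · rintro ⟨i, j, k, h, hY⟩
    have hip : i ≠ p := by
      rintro rfl
      simpa using h.apply_mid_lt
    have hkp : k ≠ p := by
      rintro rfl
      simpa using h.apply_lt_right
    obtain ⟨i, rfl⟩ := Fin.exists_succAbove_eq hip
    obtain ⟨k, rfl⟩ := Fin.exists_succAbove_eq hkp
    rcases Fin.eq_self_or_eq_succAbove p j with rfl | ⟨j, rfl⟩
    · have hik := is213_insertValue_zero_self_iff.1 h
      rw [insertValue_apply_self, hend hik.2.1] at hY
      exact .inr ⟨i, k, hik, hY⟩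
    · exact .inl ⟨i, j, k, is213_insertValue_succAbove_iff.1 h, by simpa using hY⟩
  · rintro (⟨i, j, k, h, hY⟩ | ⟨i, k, h, hY⟩)
    · exact ⟨_, _, _, is213_insertValue_succAbove_iff.2 h, by simpa using hY⟩
    · refine ⟨_, _, _, is213_insertValue_zero_self_iff.2 h, ?_⟩
      rwa [insertValue_apply_self, hend h.2.1]

end InsertValue

/-- The first `a` entries of `π` exceed all the others: `π` splits as a block sum after `a`
entries. -/
def PrefixDominates {n : ℕ} (a : ℕ) (π : Perm (Fin n)) : Prop :=
  ∀ i j : Fin n, (i : ℕ) < a → a ≤ (j : ℕ) → π j < π i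

lemma not_prefixDominates_iff {n a : ℕ} {π : Perm (Fin n)} :
    ¬ PrefixDominates a π ↔ ∃ i j : Fin n, (i : ℕ) < a ∧ a ≤ (j : ℕ) ∧ π i < π j := by
  simp only [PrefixDominates, not_forall, not_lt, exists_prop]
  refine exists₂_congr fun i j => and_congr_right fun hi => and_congr_right fun hj => ?_
  have hij : i ≠ j := by
    rintro rfl
    exact hj.not_gt hi
  exact (π.injective.ne hij).le_iff_lt

lemma containsPat_insertValue_zero_p213_iff {n : ℕ} {p : Fin (n + 1)} {σ : Perm (Fin n)} :
    ContainsPat (insertValue p 0 σ) p213 ↔ ContainsPat σ p213 ∨ ¬ PrefixDominates (p : ℕ) σ := by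
  rw [← containsIn_const_iff, containsIn_insertValue_zero_p213_iff monotone_const,
    containsPat_p213_iff, not_prefixDominates_iff]
  simp only [Nat.succ_le_iff, Fin.is_lt, and_true, Nat.add_lt_add_iff_right]

section BlockSum

variable {a b : ℕ}

lemma val_blockSum_castAdd (σ : Perm (Fin a)) (τ : Perm (Fin b)) (i : Fin a) :
    (blockSum σ τ (Fin.castAdd b i) : ℕ) = b + σ i := by
  simp [blockSum, Nat.add_comm]

lemma val_blockSum_natAdd (σ : Perm (Fin a)) (τ : Perm (Fin b)) (j : Fin b) :
    (blockSum σ τ (Fin.natAdd a j) : ℕ) = τ j := by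
  simp [blockSum]

lemma prefixDominates_blockSum (σ : Perm (Fin a)) (τ : Perm (Fin b)) :
    PrefixDominates a (blockSum σ τ) := by
  intro i j hi hj
  induction i using Fin.addCases with
  | right i => simp at hi
  | left i =>
    induction j using Fin.addCases with
    | left j => exact absurd hj (by simp)
    | right j =>
      rw [Fin.lt_def, val_blockSum_castAdd, val_blockSum_natAdd]
      omega

lemma PrefixDominates.le_val_apply_castAdd {π : Perm (Fin (a + b))} (h : PrefixDominates a π)
    (i : Fin a) : b ≤ (π (Fin.castAdd b i) : ℕ) := by
  simpa using Finset.card_le_card_of_injOn (s := Finset.univ)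
    (t := Finset.Iio (π (Fin.castAdd b i))) (fun j : Fin b => π (Fin.natAdd a j))
    (fun j _ => by simpa using h _ _ (by simp) (by simp))
    (π.injective.comp (Fin.natAdd_injective b a)).injOn

lemma exists_blockSum_eq_iff {π : Perm (Fin (a + b))} :
    (∃ σ τ, blockSum σ τ = π) ↔ PrefixDominates a π := by
  refine ⟨?_, fun h => ?_⟩
  · rintro ⟨σ, τ, rfl⟩
    exact prefixDominates_blockSum σ τ
  · let e : Fin a ⊕ Fin b ≃ Fin (a + b) :=
      ((sumComm _ _).trans finSumFinEquiv).trans (finCongr (Nat.add_comm b a))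
    let ρ : Perm (Fin a ⊕ Fin b) := finSumFinEquiv.trans (π.trans e.symm)
    have hρ : Set.MapsTo ρ (Set.range Sum.inl) (Set.range Sum.inl) := by
      rintro _ ⟨i, rfl⟩
      have hi := h.le_val_apply_castAdd i
      refine ⟨⟨π (Fin.castAdd b i) - b, by omega⟩, ?_⟩
      simp only [ρ, trans_apply, finSumFinEquiv_apply_left, eq_symm_apply]
      ext
      simp [e, hi]
    obtain ⟨⟨σ, τ⟩, hστ⟩ := Perm.mem_sumCongrHom_range_of_perm_mapsTo_inl hρ
    refine ⟨σ, τ, ?_⟩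
    calc blockSum σ τ = finSumFinEquiv.symm.trans ((Perm.sumCongrHom _ _ (σ, τ)).trans e) := rfl
      _ = π := by ext; simp [hστ, ρ]

lemma blockSum_injective2 : Function.Injective2 (blockSum (m := a) (k := b)) := by
  intro σ σ' τ τ' h
  refine ⟨Equiv.ext fun i => Fin.ext ?_, Equiv.ext fun j => Fin.ext ?_⟩
  · simpa [val_blockSum_castAdd] using
      congrArg Fin.val (DFunLike.congr_fun h (Fin.castAdd b i))
  · simpa [val_blockSum_natAdd] using
      congrArg Fin.val (DFunLike.congr_fun h (Fin.natAdd a j))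

lemma containsPat_blockSum_p213_iff {σ : Perm (Fin a)} {τ : Perm (Fin b)} :
    ContainsPat (blockSum σ τ) p213 ↔ ContainsPat σ p213 ∨ ContainsPat τ p213 := by
  have hleft {i j k : Fin a} : Is213 (blockSum σ τ) (Fin.castAdd b i) (Fin.castAdd b j)
      (Fin.castAdd b k) ↔ Is213 σ i j k :=
    is213_comp_iff (fun _ _ => (Fin.strictMono_castAdd b).lt_iff_lt) fun _ _ => by
      simp only [Fin.lt_def, val_blockSum_castAdd, Nat.add_lt_add_iff_left]
  have hright {i j k : Fin b} : Is213 (blockSum σ τ) (Fin.natAdd a i) (Fin.natAdd a j)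
      (Fin.natAdd a k) ↔ Is213 τ i j k :=
    is213_comp_iff (fun _ _ => (Fin.strictMono_natAdd a).lt_iff_lt) fun _ _ => by
      simp only [Fin.lt_def, val_blockSum_natAdd]
  simp only [containsPat_p213_iff]
  constructor
  · rintro ⟨i, j, k, h⟩
    have hik : ¬ ((i : ℕ) < a ∧ a ≤ (k : ℕ)) := fun ⟨hi, hk⟩ =>
      h.apply_lt_right.not_gt (prefixDominates_blockSum σ τ i k hi hk)
    have hij : (i : ℕ) < j := h.left_lt_mid
    have hjk : (j : ℕ) < k := h.mid_lt_right
    by_cases hk : (k : ℕ) < a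
    · exact .inl ⟨i.castLT (by omega), j.castLT (by omega), k.castLT hk, hleft.1 h⟩
    · have hshift {x : Fin (a + b)} (hx : a ≤ x) : ∃ y, Fin.natAdd a y = x :=
        ⟨⟨x - a, by omega⟩, Fin.ext (Nat.add_sub_cancel' hx)⟩
      obtain ⟨i, rfl⟩ := hshift (x := i) (by omega)
      obtain ⟨j, rfl⟩ := hshift (x := j) (by omega)
      obtain ⟨k, rfl⟩ := hshift (x := k) (by omega)
      exact .inr ⟨i, j, k, hright.1 h⟩
  · rintro (⟨i, j, k, h⟩ | ⟨i, j, k, h⟩)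
    · exact ⟨_, _, _, hleft.2 h⟩
    · exact ⟨_, _, _, hright.2 h⟩

end BlockSum

lemma card_avoiders_p213_prefixDominates (a b : ℕ) :
    Nat.card {π : Perm (Fin (a + b)) // ¬ ContainsPat π p213 ∧ PrefixDominates a π} =
      SnCard a p213 * SnCard b p213 := by
  simp only [SnCard]
  rw [← Nat.card_prod]
  refine (Nat.card_congr (Equiv.ofBijective (fun x => ⟨blockSum x.1.1 x.2.1,
    by simp [containsPat_blockSum_p213_iff, x.1.2, x.2.2], prefixDominates_blockSum _ _⟩)
    ⟨fun x y h => ?_, ?_⟩)).symm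
  · have hxy := blockSum_injective2 (congrArg Subtype.val h)
    exact Prod.ext (Subtype.ext hxy.1) (Subtype.ext hxy.2)
  · rintro ⟨π, havoid, hdom⟩
    obtain ⟨σ, τ, rfl⟩ := exists_blockSum_eq_iff.2 hdom
    rw [containsPat_blockSum_p213_iff, not_or] at havoid
    exact ⟨(⟨σ, havoid.1⟩, ⟨τ, havoid.2⟩), rfl⟩

/-- The number of `τ`-avoiding transversals of the diagram `b` whose dot in the bottom row lies in
column `p`. They are counted through the permutations left after deleting this dot. -/
noncomputable def zeroAtCard {n k : ℕ} (b : Fin (n + 1) → ℕ) (τ : Perm (Fin k))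
    (p : Fin (n + 1)) : ℕ :=
  Nat.card {σ // IsTransversal b (insertValue p 0 σ) ∧ ¬ ContainsIn b (insertValue p 0 σ) τ}

lemma SYcard_eq_sum_zeroAtCard {n k : ℕ} (b : Fin (n + 1) → ℕ) (τ : Perm (Fin k)) :
    SYcard b τ = ∑ p, zeroAtCard b τ p :=
  card_perm_subtype_eq_sum_insertValue 0 _

lemma zeroAtCard_const_p213 {n : ℕ} (p : Fin (n + 1)) :
    zeroAtCard (fun _ => n + 1) p213 p = SnCard p p213 * SnCard (n - p) p213 := by
  obtain ⟨p, hp⟩ := p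
  obtain ⟨q, rfl⟩ := Nat.exists_eq_add_of_le (Nat.lt_succ_iff.1 hp)
  simp only [zeroAtCard, isTransversal_const, true_and, containsIn_const_iff,
    containsPat_insertValue_zero_p213_iff, not_or, not_not, add_tsub_cancel_left]
  exact card_avoiders_p213_prefixDominates p q

theorem SnCard_p213 (n : ℕ) : SnCard n p213 = catalan n := by
  induction n using Nat.strong_induction_on with
  | _ n ih =>
    cases n with
    | zero =>
      have havoid (π : Perm (Fin 0)) : ¬ ContainsPat π p213 := fun ⟨f, _⟩ => (f 0).elim0
      simp [SnCard, havoid]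
    | succ n =>
      rw [catalan_succ, ← SYcard_const, SYcard_eq_sum_zeroAtCard]
      refine Finset.sum_congr rfl fun p _ => ?_
      rw [zeroAtCard_const_p213, ih _ p.2, ih _ (by omega)]

section MissingCorner

variable {n : ℕ} {p : Fin (n + 1)} {σ : Perm (Fin n)}

lemma bYn_zero : bYn (n + 1) 0 = n := rfl

lemma bYn_succ (y : Fin n) : bYn (n + 1) y.succ = n + 1 := rfl

lemma monotone_bYn : Monotone (bYn n) := by
  intro x y (hxy : (x : ℕ) ≤ y)
  unfold bYn
  split_ifs <;> omega

lemma isTransversal_bYn_insertValue_zero_iff :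
    IsTransversal (bYn (n + 1)) (insertValue p 0 σ) ↔ p ≠ Fin.last n := by
  have hcell (x y : Fin (n + 1)) : (x : ℕ) + 1 ≤ bYn (n + 1) y ↔ ¬ (y = 0 ∧ x = Fin.last n) := by
    simp only [bYn, Fin.ext_iff, Fin.val_last, Fin.val_zero]
    split_ifs <;> omega
  simp only [IsTransversal, hcell, insertValue_apply_eq_iff, not_and, forall_eq, ne_eq]

lemma containsIn_bYn_insertValue_zero_p213_iff :
    ContainsIn (bYn (n + 1)) (insertValue p 0 σ) p213 ↔ ContainsPat σ p213 ∨
      ∃ i k : Fin n, ((i : ℕ) < p ∧ (p : ℕ) ≤ k ∧ σ i < σ k) ∧ (k : ℕ) + 2 ≤ n := by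
  rw [containsIn_insertValue_zero_p213_iff monotone_bYn, containsPat_p213_iff]
  simp only [bYn_zero, bYn_succ, Nat.succ_le_iff, Fin.is_lt, and_true]

lemma containsIn_bYn_insertValue_zero_p213_iff_of_lt (hp : (p : ℕ) + 1 < n) :
    ContainsIn (bYn (n + 1)) (insertValue p 0 σ) p213 ↔
      ContainsPat (insertValue p 0 σ) p213 := by
  rw [containsIn_bYn_insertValue_zero_p213_iff, containsPat_insertValue_zero_p213_iff,
    not_prefixDominates_iff]
  refine ⟨Or.imp_right fun ⟨i, k, h, _⟩ => ⟨i, k, h⟩, ?_⟩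
  rintro (h | ⟨i, k, hi, hk, hik⟩)
  · exact .inl h
  by_cases hkn : (k : ℕ) + 2 ≤ n
  · exact .inr ⟨i, k, ⟨hi, hk, hik⟩, hkn⟩
  -- Now `k` is the last position, so either `σ i < σ q` or `i`, `q`, `k` form a `213`.
  let q : Fin n := ⟨n - 2, by omega⟩
  have hpq : (p : ℕ) ≤ q := by simp only [q]; omega
  have hiq : i < q := hi.trans_le hpq
  have hqk : q < k := by simp only [q, Fin.lt_def]; omega
  rcases lt_or_gt_of_ne (σ.injective.ne hiq.ne) with h | h
  · exact .inr ⟨i, q, ⟨hi, hpq, h⟩, by simp only [q]; omega⟩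
  · exact .inl (containsPat_p213_iff.2 ⟨i, q, k, hiq, hqk, h, hik⟩)

lemma zeroAtCard_bYn_p213_of_lt (hp : (p : ℕ) + 1 < n) :
    zeroAtCard (bYn (n + 1)) p213 p = zeroAtCard (fun _ => n + 1) p213 p := by
  have hlast : p ≠ Fin.last n := by
    rintro rfl
    simp at hp
  simp only [zeroAtCard, isTransversal_bYn_insertValue_zero_iff, ne_eq, hlast, not_false_eq_true,
    containsIn_bYn_insertValue_zero_p213_iff_of_lt hp, isTransversal_const, containsIn_const_iff]

lemma zeroAtCard_bYn_p213_of_eq (hp : (p : ℕ) + 1 = n) :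
    zeroAtCard (bYn (n + 1)) p213 p = SnCard n p213 := by
  have hlast : p ≠ Fin.last n := by
    rintro rfl
    simp at hp
  have hempty (σ : Perm (Fin n)) : ¬ ∃ i k : Fin n,
      ((i : ℕ) < p ∧ (p : ℕ) ≤ k ∧ σ i < σ k) ∧ (k : ℕ) + 2 ≤ n := by
    rintro ⟨i, k, ⟨-, hk, -⟩, hkn⟩
    omega
  simp only [zeroAtCard, SnCard, isTransversal_bYn_insertValue_zero_iff, ne_eq, hlast,
    not_false_eq_true, true_and, containsIn_bYn_insertValue_zero_p213_iff, hempty, or_false]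

lemma zeroAtCard_bYn_last {k : ℕ} (τ : Perm (Fin k)) :
    zeroAtCard (bYn (n + 1)) τ (Fin.last n) = 0 := by
  simp [zeroAtCard, isTransversal_bYn_insertValue_zero_iff]

end MissingCorner

theorem stmt15 (n : ℕ) (hn : 2 ≤ n) :
    SYcard (bYn n) p213 = catalan n - catalan (n - 2) := by
  obtain ⟨m, rfl⟩ := Nat.exists_eq_add_of_le' hn
  have hsquare : catalan (m + 2) =
      (∑ q : Fin m, zeroAtCard (fun _ => m + 2) p213 q.castSucc.castSucc) +
        catalan m + catalan (m + 1) := by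
    rw [← SnCard_p213, ← SYcard_const, SYcard_eq_sum_zeroAtCard, Fin.sum_univ_castSucc,
      Fin.sum_univ_castSucc]
    simp [zeroAtCard_const_p213, SnCard_p213]
  have hcorner : SYcard (bYn (m + 2)) p213 =
      (∑ q : Fin m, zeroAtCard (fun _ => m + 2) p213 q.castSucc.castSucc) + catalan (m + 1) := by
    rw [SYcard_eq_sum_zeroAtCard, Fin.sum_univ_castSucc, Fin.sum_univ_castSucc,
      zeroAtCard_bYn_last, zeroAtCard_bYn_p213_of_eq (by simp), SnCard_p213, add_zero]
    simp only [zeroAtCard_bYn_p213_of_lt, Fin.val_castSucc, Nat.add_lt_add_iff_right, Fin.is_lt]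
  rw [hcorner, hsquare, Nat.add_sub_cancel]
  omega
end

section
/- For every n ≥ 2, |S_{Y_n}(312)| = 2c_n − 3c_{n−1}. -/
/-!
Call `u` a *cut* of a permutation `σ` if `σ` maps `{0, …, u - 1}` to itself. Appending a last entry
at height `v` to a 312-avoider keeps it a 312-avoider exactly when `v` is a cut, and the cuts of the
new permutation are its length and the old cuts `u ≤ v`. So an avoider with `k` cuts has `k`
children, with `2, …, k + 1` cuts: this is the Catalan generating tree. With `C` the Catalan series,
`C ^ (k + 1) = C ^ k + X * C ^ (k + 2)` shows that the coefficients of `C ^ k` obey the recursion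
of this tree, whence `|S_n(312)| = c_n`.

Going from the square to `Y_n` excuses exactly the occurrences of 312 whose 2 lies in the last
column and whose 1 is the lowest dot. Removing the lowest dot and then the last column turns an
avoider in `Y_n` into a 312-avoider of length `n - 2` together with two arbitrary cuts of it. Hence,
summing over the 312-avoiders of length `n - 2` with `k` their numbers of cuts,
`|S_{Y_n}(312)| = ∑ k ^ 2`, while `c_{n-1} = ∑ k` and `2 c_n = ∑ k (k + 3)`.
-/

open Equiv

open Finset

/-! ### Occurrences of 312 -/

section Pattern

variable {n k : ℕ}

lemma containsPat_iff_containsIn_const (π : Perm (Fin n)) (τ : Perm (Fin k)) :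
    ContainsPat π τ ↔ ContainsIn (fun _ => n) π τ := by
  simp [ContainsPat, ContainsIn]

lemma containsIn_p312_iff {b : Fin n → ℕ} (hb : Monotone b) (π : Perm (Fin n)) :
    ContainsIn b π p312 ↔ ∃ i j k : Fin n,
      i < j ∧ j < k ∧ π j < π k ∧ π k < π i ∧ (k : ℕ) + 1 ≤ b (π j) := by
  constructor
  · rintro ⟨f, hf, hπ, hY⟩
    exact ⟨f 0, f 1, f 2, hf (by decide), hf (by decide), (hπ 1 2).1 (by decide),
      (hπ 2 0).1 (by decide), hY 2 1⟩
  · rintro ⟨i, j, k, hij, hjk, hπjk, hπki, hY⟩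
    have hπji := hπjk.trans hπki
    refine ⟨![i, j, k], by simp [hij, hjk], ?_, fun s t => ?_⟩
    · simp [Fin.forall_fin_succ, p312, hπjk, hπki, hπji, hπjk.le, hπki.le, hπji.le]
    · -- The last column and the lowest dot of the occurrence give the extreme cell.
      have hs : ![i, j, k] s ≤ k := by
        fin_cases s
        exacts [(hij.trans hjk).le, hjk.le, le_rfl]
      have ht : π j ≤ π (![i, j, k] t) := by
        fin_cases t
        exacts [hπji.le, le_rfl, hπjk.le]
      exact (Nat.succ_le_succ hs).trans (hY.trans (hb ht))

lemma not_containsPat_p312_iff (π : Perm (Fin n)) :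
    ¬ ContainsPat π p312 ↔ ∀ i j k : Fin n, i < j → j < k → π j < π k → π i ≤ π k := by
  rw [containsPat_iff_containsIn_const, containsIn_p312_iff monotone_const]
  push Not
  exact ⟨fun h i j k hij hjk hπ => not_lt.1 fun hki => (h i j k hij hjk hπ hki).not_ge k.is_lt,
    fun h i j k hij hjk hπ hki => ((h i j k hij hjk hπ).not_gt hki).elim⟩

lemma not_containsPat_p312_succ_iff (π : Perm (Fin (n + 1))) :
    ¬ ContainsPat π p312 ↔
      (∀ i j k : Fin n, i < j → j < k → π j.castSucc < π k.castSucc →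
        π i.castSucc ≤ π k.castSucc) ∧
      ∀ i j : Fin n, i < j → π j.castSucc < π (Fin.last n) → π i.castSucc ≤ π (Fin.last n) := by
  rw [not_containsPat_p312_iff]
  refine ⟨fun h => ⟨fun i j k => h i.castSucc j.castSucc k.castSucc, fun i j hij =>
    h i.castSucc j.castSucc (Fin.last n) hij j.castSucc_lt_last⟩, ?_⟩
  rintro ⟨hinit, hlast⟩ i j k hij hjk
  obtain ⟨j, rfl⟩ := Fin.exists_castSucc_eq.2 (Fin.ne_last_of_lt hjk)
  obtain ⟨i, rfl⟩ := Fin.exists_castSucc_eq.2 (Fin.ne_last_of_lt hij)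
  induction k using Fin.lastCases with
  | last => exact hlast i j hij
  | cast k => exact hinit i j k hij hjk

open Classical in
/-- The set `S_n(τ)` of permutations of length `n` avoiding `τ`. -/
noncomputable def avoiders (n : ℕ) (τ : Perm (Fin k)) : Finset (Perm (Fin n)) :=
  {σ | ¬ ContainsPat σ τ}

lemma mem_avoiders {τ : Perm (Fin k)} {σ : Perm (Fin n)} :
    σ ∈ avoiders n τ ↔ ¬ ContainsPat σ τ := by
  simp [avoiders]

lemma card_avoiders (n : ℕ) (τ : Perm (Fin k)) : #(avoiders n τ) = SnCard n τ :=
  (Nat.subtype_card _ fun _ => mem_avoiders).symm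

end Pattern

/-! ### Inserting a dot -/

section InsertDot

variable {n : ℕ}

/-- The permutation obtained from `σ` by inserting a dot in column `p` at height `v`; the columns
from `p` on move right and the dots at height `v` or above move up. -/
def insertDot (p v : Fin (n + 1)) (σ : Perm (Fin n)) : Perm (Fin (n + 1)) :=
  (finSuccEquiv' p).trans ((optionCongr σ).trans (finSuccEquiv' v).symm)

@[simp]
lemma insertDot_self (p v : Fin (n + 1)) (σ : Perm (Fin n)) : insertDot p v σ p = v := by
  simp [insertDot]

@[simp]
lemma insertDot_succAbove (p v : Fin (n + 1)) (σ : Perm (Fin n)) (i : Fin n) :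
    insertDot p v σ (p.succAbove i) = v.succAbove (σ i) := by
  simp [insertDot]

lemma insertDot_apply_eq_iff {p v : Fin (n + 1)} {σ : Perm (Fin n)} {i : Fin (n + 1)} :
    insertDot p v σ i = v ↔ i = p := by
  rw [← (insertDot p v σ).injective.eq_iff (a := i), insertDot_self]

@[simp]
lemma insertDot_last_castSucc (v : Fin (n + 1)) (σ : Perm (Fin n)) (i : Fin n) :
    insertDot (Fin.last n) v σ i.castSucc = v.succAbove (σ i) := by
  rw [← Fin.succAbove_last_apply, insertDot_succAbove]

lemma insertDot_symm (p v : Fin (n + 1)) (σ : Perm (Fin n)) :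
    (insertDot p v σ).symm = insertDot v p σ.symm :=
  rfl

lemma insertDot_injective (p v : Fin (n + 1)) : Function.Injective (insertDot p v) := by
  intro σ τ h
  ext1 i
  apply v.succAbove_right_injective
  rw [← insertDot_succAbove p, h, insertDot_succAbove]

lemma bijective_insertDot_column (p : Fin (n + 1)) :
    Function.Bijective fun x : Fin (n + 1) × Perm (Fin n) => insertDot p x.1 x.2 := by
  rw [Fintype.bijective_iff_injective_and_card]
  refine ⟨?_, by simp [Fintype.card_perm, Nat.factorial_succ]⟩
  rintro ⟨v, σ⟩ ⟨w, τ⟩ h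
  obtain rfl : v = w := by simpa using DFunLike.congr_fun h p
  exact congrArg (Prod.mk v) (insertDot_injective p v h)

variable {M : Type*} [AddCommMonoid M]

lemma sum_perm_eq_sum_insertDot_column (p : Fin (n + 1)) (f : Perm (Fin (n + 1)) → M) :
    ∑ π, f π = ∑ σ, ∑ v, f (insertDot p v σ) := by
  rw [← (bijective_insertDot_column p).sum_comp, Fintype.sum_prod_type_right]

lemma sum_perm_eq_sum_insertDot_row (v : Fin (n + 1)) (f : Perm (Fin (n + 1)) → M) :
    ∑ π, f π = ∑ σ, ∑ p, f (insertDot p v σ) := by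
  calc ∑ π, f π
    _ = ∑ π : Perm (Fin (n + 1)), f π.symm := ((symmEquiv _ _).sum_comp f).symm
    _ = ∑ σ : Perm (Fin n), ∑ p, f (insertDot p v σ.symm) := by
      simp only [sum_perm_eq_sum_insertDot_column v, insertDot_symm]
    _ = ∑ σ, ∑ p, f (insertDot p v σ) :=
      (symmEquiv _ _).sum_comp fun σ => ∑ p, f (insertDot p v σ)

end InsertDot

/-! ### Cuts -/

section Cuts

variable {n : ℕ}

/-- The cuts of `σ`: the `u ∈ {0, …, n}` such that `σ` maps `{0, …, u - 1}` to itself. -/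
def cuts (σ : Perm (Fin n)) : Finset (Fin (n + 1)) :=
  {u | ∀ i : Fin n, i.castSucc < u → (σ i).castSucc < u}

lemma mem_cuts {σ : Perm (Fin n)} {u : Fin (n + 1)} :
    u ∈ cuts σ ↔ ∀ i : Fin n, i.castSucc < u → (σ i).castSucc < u := by
  simp [cuts]

lemma last_mem_cuts (σ : Perm (Fin n)) : Fin.last n ∈ cuts σ :=
  mem_cuts.2 fun i _ => Fin.castSucc_lt_last (σ i)

lemma cuts_symm (σ : Perm (Fin n)) : cuts σ.symm = cuts σ := by
  ext u
  simp only [mem_cuts]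
  exact Perm.perm_symm_mapsTo_iff_mapsTo (s := {i : Fin n | i.castSucc < u})

lemma mem_cuts_iff_forall_le {σ : Perm (Fin n)} {u : Fin (n + 1)} :
    u ∈ cuts σ ↔ ∀ k : Fin n, u ≤ k.castSucc → u ≤ (σ k).castSucc := by
  rw [← cuts_symm, mem_cuts, ← σ.forall_congr_right]
  simp only [symm_apply_apply]
  exact forall_congr' fun k => by rw [← not_lt, ← not_lt, not_imp_not]

lemma mem_cuts_iff_forall_apply_le {σ : Perm (Fin n)} {u : Fin (n + 1)} :
    u ∈ cuts σ ↔ ∀ i k : Fin n, i.castSucc < u → u ≤ k.castSucc → σ i ≤ σ k := by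
  refine ⟨fun h i k hi hk => ?_, fun h => mem_cuts.2 fun i hi => ?_⟩
  · exact Fin.castSucc_le_castSucc_iff.1
      ((mem_cuts.1 h i hi).le.trans (mem_cuts_iff_forall_le.1 h k hk))
  · by_contra! hσi
    have hu : u ∈ cuts σ := mem_cuts_iff_forall_le.2 fun k hk =>
      hσi.trans (Fin.castSucc_le_castSucc_iff.2 (h i k hi hk))
    exact (mem_cuts.1 hu i hi).not_ge hσi

lemma mem_cuts_iff_forall_apply_lt_of_lt {σ : Perm (Fin n)} {u : Fin (n + 1)} :
    u ∈ cuts σ ↔ ∀ i k : Fin n, i < k → (σ k).castSucc < u → (σ i).castSucc < u := by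
  rw [← cuts_symm, mem_cuts_iff_forall_apply_le]
  refine ⟨fun h i k hik hk => ?_, fun h i k hi hk => ?_⟩
  · by_contra! hi
    have hki : k ≤ i := by simpa using h (σ k) (σ i) hk hi
    exact hki.not_gt hik
  · by_contra! hki
    exact hk.not_gt (by simpa using h _ _ hki (by simpa using hi))

lemma le_succAbove_iff_le_castSucc {u v : Fin (n + 1)} (huv : u ≤ v) (x : Fin n) :
    u ≤ v.succAbove x ↔ u ≤ x.castSucc := by
  rcases lt_or_ge x.castSucc v with hx | hx
  · rw [Fin.succAbove_of_castSucc_lt v x hx]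
  · rw [Fin.succAbove_of_le_castSucc v x hx]
    exact iff_of_true (huv.trans (hx.trans x.castSucc_lt_succ.le)) (huv.trans hx)

lemma castSucc_mem_cuts_insertDot_last_iff {σ : Perm (Fin n)} {u v : Fin (n + 1)} :
    u.castSucc ∈ cuts (insertDot (Fin.last n) v σ) ↔ u ∈ cuts σ ∧ u ≤ v := by
  simp only [mem_cuts_iff_forall_le, Fin.forall_fin_succ', insertDot_last_castSucc, insertDot_self,
    Fin.castSucc_le_castSucc_iff, Fin.le_last, true_imp_iff]
  refine and_congr_left fun huv => ?_
  simp only [le_succAbove_iff_le_castSucc huv]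

lemma cuts_insertDot_last (v : Fin (n + 1)) (σ : Perm (Fin n)) :
    cuts (insertDot (Fin.last n) v σ) =
      insert (Fin.last (n + 1)) ({u ∈ cuts σ | u ≤ v}.map Fin.castSuccEmb) := by
  ext w
  induction w using Fin.lastCases with
  | last => simp [last_mem_cuts]
  | cast u => simp [castSucc_mem_cuts_insertDot_last_iff, Fin.castSucc_ne_last]

lemma card_cuts_insertDot_last (v : Fin (n + 1)) (σ : Perm (Fin n)) :
    #(cuts (insertDot (Fin.last n) v σ)) = #{u ∈ cuts σ | u ≤ v} + 1 := by
  rw [cuts_insertDot_last, card_insert_of_notMem (by simp [Fin.castSucc_ne_last]), card_map]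

end Cuts

/-! ### The generating tree of the 312-avoiders -/

section GeneratingTree

variable {M : Type*} [AddCommMonoid M]

lemma not_containsPat_p312_insertDot_last_iff {n : ℕ} (v : Fin (n + 1)) (σ : Perm (Fin n)) :
    ¬ ContainsPat (insertDot (Fin.last n) v σ) p312 ↔ ¬ ContainsPat σ p312 ∧ v ∈ cuts σ := by
  simp only [not_containsPat_p312_succ_iff, not_containsPat_p312_iff σ,
    mem_cuts_iff_forall_apply_lt_of_lt, insertDot_last_castSucc, insertDot_self,
    Fin.succAbove_lt_succAbove_iff, Fin.succAbove_le_succAbove_iff,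
    Fin.succAbove_lt_iff_castSucc_lt, (Fin.succAbove_ne v _).le_iff_lt]

lemma sum_avoiders_p312_succ (m : ℕ) (f : Perm (Fin (m + 1)) → M) :
    ∑ π ∈ avoiders (m + 1) p312, f π =
      ∑ σ ∈ avoiders m p312, ∑ v ∈ cuts σ, f (insertDot (Fin.last m) v σ) := by
  classical
  simp only [avoiders, sum_filter, sum_perm_eq_sum_insertDot_column (Fin.last m),
    not_containsPat_p312_insertDot_last_iff, ite_and]
  refine sum_congr rfl fun σ _ => ?_
  split_ifs <;> simp

lemma sum_card_filter_le {α : Type*} [LinearOrder α] (s : Finset α) (g : ℕ → M) :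
    ∑ v ∈ s, g #{u ∈ s | u ≤ v} = ∑ r ∈ range #s, g (r + 1) := by
  induction s using Finset.induction_on_max with
  | empty => simp
  | insert a s ha ih =>
    have has : a ∉ s := fun h => (ha a h).false
    have hfilter : {u ∈ insert a s | u ≤ a} = insert a s :=
      filter_true_of_mem fun u hu => (mem_insert.1 hu).elim (·.le) fun h => (ha u h).le
    rw [sum_insert has, hfilter, card_insert_of_notMem has, sum_range_succ, ← ih, add_comm]
    congr 1
    refine sum_congr rfl fun v hv => ?_
    rw [filter_insert, if_neg (ha v hv).not_ge]

lemma sum_avoiders_p312_succ_card_cuts (m : ℕ) (g : ℕ → M) :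
    ∑ π ∈ avoiders (m + 1) p312, g #(cuts π) =
      ∑ σ ∈ avoiders m p312, ∑ r ∈ range #(cuts σ), g (r + 2) := by
  simp only [sum_avoiders_p312_succ, card_cuts_insertDot_last]
  exact sum_congr rfl fun σ _ => sum_card_filter_le (cuts σ) fun r => g (r + 1)

lemma SnCard_p312_succ (m : ℕ) :
    SnCard (m + 1) p312 = ∑ σ ∈ avoiders m p312, #(cuts σ) := by
  rw [← card_avoiders, card_eq_sum_ones, sum_avoiders_p312_succ_card_cuts m fun _ => 1]
  simp

lemma two_mul_SnCard_p312_add_two (m : ℕ) :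
    2 * SnCard (m + 2) p312 = ∑ σ ∈ avoiders m p312, #(cuts σ) * (#(cuts σ) + 3) := by
  have hsum (k : ℕ) : 2 * ∑ r ∈ range k, (r + 2) = k * (k + 3) := by
    induction k with
    | zero => rfl
    | succ k ih => rw [sum_range_succ, mul_add, ih]; ring
  simp only [SnCard_p312_succ, sum_avoiders_p312_succ_card_cuts m fun k => k, mul_sum, hsum]

end GeneratingTree

/-! ### Catalan numbers -/

section Catalan

open PowerSeries

lemma sum_range_coeff_catalanSeries_pow (j k : ℕ) :
    ∑ r ∈ range k, coeff j (catalanSeries ^ (r + 2)) = coeff (j + 1) (catalanSeries ^ k) := by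
  induction k with
  | zero => simp [coeff_one]
  | succ k ih =>
    have hpow : catalanSeries ^ (k + 1) = catalanSeries ^ k + X * catalanSeries ^ (k + 2) := by
      calc catalanSeries ^ (k + 1) = catalanSeries ^ k * (catalanSeries ^ 2 * X + 1) := by
            rw [catalanSeries_sq_mul_X_add_one, pow_succ]
        _ = catalanSeries ^ k + X * catalanSeries ^ (k + 2) := by ring
    rw [sum_range_succ, ih, hpow, map_add, coeff_succ_X_mul]

lemma sum_avoiders_p312_coeff_catalanSeries_pow (m j : ℕ) :
    ∑ σ ∈ avoiders m p312, coeff j (catalanSeries ^ #(cuts σ)) = catalan (m + j) := by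
  induction m generalizing j with
  | zero =>
    simp [avoiders, not_containsPat_p312_iff, cuts]
  | succ m ih =>
    rw [sum_avoiders_p312_succ_card_cuts m fun k => coeff j (catalanSeries ^ k)]
    simp only [sum_range_coeff_catalanSeries_pow, ih]
    congr 1
    omega

theorem SnCard_p312 (n : ℕ) : SnCard n p312 = catalan n := by
  simpa [← card_avoiders] using sum_avoiders_p312_coeff_catalanSeries_pow n 0

end Catalan

/-! ### The square without its corner -/

section Corner

variable {n : ℕ}

lemma bYn_monotone (n : ℕ) : Monotone (bYn n) := by
  intro x y hxy
  rw [Fin.le_def] at hxy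
  unfold bYn
  split_ifs <;> omega

lemma succ_le_bYn_iff (x y : Fin (n + 1)) :
    (x : ℕ) + 1 ≤ bYn (n + 1) y ↔ ¬ (x = Fin.last n ∧ y = 0) := by
  simp only [bYn, Fin.ext_iff, Fin.val_last, Fin.val_zero]
  split_ifs <;> omega

lemma isTransversal_bYn_iff (π : Perm (Fin (n + 1))) :
    IsTransversal (bYn (n + 1)) π ↔ π (Fin.last n) ≠ 0 := by
  simp only [IsTransversal, succ_le_bYn_iff, not_and, forall_eq, ne_eq]

lemma not_containsIn_bYn_p312_iff (π : Perm (Fin (n + 1))) :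
    ¬ ContainsIn (bYn (n + 1)) π p312 ↔ ∀ i j k : Fin (n + 1), i < j → j < k → π j < π k →
      π k < π i → k = Fin.last n ∧ π j = 0 := by
  rw [containsIn_p312_iff (bYn_monotone _)]
  simp only [succ_le_bYn_iff]
  push Not
  rfl

lemma isTransversal_bYn_insertDot_zero_iff (p : Fin (n + 2)) (ρ : Perm (Fin (n + 1))) :
    IsTransversal (bYn (n + 2)) (insertDot p 0 ρ) ↔ p ≠ Fin.last (n + 1) := by
  rw [isTransversal_bYn_iff, ne_eq, insertDot_apply_eq_iff, ne_comm]

lemma not_containsIn_bYn_p312_insertDot_zero_iff (j : Fin (n + 1)) (ρ : Perm (Fin (n + 1))) :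
    ¬ ContainsIn (bYn (n + 2)) (insertDot j.castSucc 0 ρ) p312 ↔ ¬ ContainsPat ρ p312 ∧
      ∀ i k : Fin (n + 1), i < j → j ≤ k → ρ k < ρ i → k = Fin.last n := by
  have hlast (k : Fin (n + 1)) :
      j.castSucc.succAbove k = Fin.last (n + 1) ↔ k = Fin.last n :=
    Fin.succAbove_eq_last_iff j.castSucc_ne_last
  rw [not_containsIn_bYn_p312_iff, not_containsPat_p312_iff, and_comm, ← forall_and]
  -- An occurrence through the dot of height `0` uses it as its `1`.
  simp [Fin.forall_iff_succAbove j.castSucc, hlast, Fin.succAbove_lt_iff_castSucc_lt,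
    Fin.lt_succAbove_iff_le_castSucc, -Fin.castSucc_succAbove_castSucc]

lemma not_containsIn_bYn_p312_insertDot_zero_insertDot_last_iff (j v : Fin (n + 1))
    (σ : Perm (Fin n)) :
    ¬ ContainsIn (bYn (n + 2)) (insertDot j.castSucc 0 (insertDot (Fin.last n) v σ)) p312 ↔
      ¬ ContainsPat σ p312 ∧ v ∈ cuts σ ∧ j ∈ cuts σ := by
  rw [not_containsIn_bYn_p312_insertDot_zero_iff, not_containsPat_p312_insertDot_last_iff,
    and_assoc, mem_cuts_iff_forall_apply_le (u := j)]
  refine and_congr_right' (and_congr_right' ?_)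
  simp [Fin.forall_fin_succ', Fin.castSucc_ne_last, (Fin.le_last j).not_gt]

lemma SYcard_bYn_p312 (m : ℕ) :
    SYcard (bYn (m + 2)) p312 = ∑ σ ∈ avoiders m p312, #(cuts σ) ^ 2 := by
  classical
  rw [SYcard, Nat.card_eq_fintype_card, Fintype.card_subtype, card_filter,
    sum_perm_eq_sum_insertDot_row 0]
  simp only [Fin.sum_univ_castSucc (n := m + 1), sum_perm_eq_sum_insertDot_column (Fin.last m)]
  simp [isTransversal_bYn_insertDot_zero_iff, Fin.castSucc_ne_last,
    not_containsIn_bYn_p312_insertDot_zero_insertDot_last_iff, avoiders, sum_filter, ite_and, sq]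

end Corner

theorem stmt17 (n : ℕ) (hn : 2 ≤ n) :
    SYcard (bYn n) p312 = 2 * catalan n - 3 * catalan (n - 1) := by
  obtain ⟨m, rfl⟩ := Nat.exists_eq_add_of_le' hn
  have hcount : 2 * SnCard (m + 2) p312 =
      SYcard (bYn (m + 2)) p312 + 3 * SnCard (m + 1) p312 := by
    rw [two_mul_SnCard_p312_add_two, SYcard_bYn_p312, SnCard_p312_succ, mul_sum,
      ← sum_add_distrib]
    exact sum_congr rfl fun σ _ => by ring
  rw [← SnCard_p312, ← SnCard_p312, hcount, add_tsub_assoc_of_le one_le_two m]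
  exact (Nat.add_sub_cancel_right ..).symm
end
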